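/- arXiv:2110.08804 — 3 statements merged into one kernel-verified Lean document; each statement's English description precedes it below -/
import Mathlib

section
/- Let O(G) be a cosemisimple involutory Hopf algebra over an algebraically closed field (i.e. S² = id on O(G), hence also on any Hopf algebra quotient) and let π: O(G) → O(H) be a surjective Hopf algebra morphism that is left-normal or right-normal. Then O(H) is cosemisimple and π is normal. -/
/- Common infrastructure: right comodules over coalgebras, simplicity,
cosemisimplicity, subcoalgebras, adjoint coactions, normality, etc. -/

open TensorProduct

universe u

namespace QG

variable (k : Type u) [Field k]

section Coalg

variable (C : Type u) [AddCommGroup C] [Module k C] [Coalgebra k C]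

/-- `ρ : V →ₗ[k] V ⊗[k] C` is a (coassociative, counital) right coaction. -/
structure IsComod {V : Type u} [AddCommGroup V] [Module k V]
    (ρ : V →ₗ[k] V ⊗[k] C) : Prop where
  coassoc : ∀ v : V, ρ.rTensor C (ρ v) =
    (TensorProduct.assoc k V C C).symm.toLinearMap
      ((Coalgebra.comul (R := k) (A := C)).lTensor V (ρ v))
  counit : ∀ v : V, (TensorProduct.rid k V)
      ((Coalgebra.counit (R := k) (A := C)).lTensor V (ρ v)) = v

/-- A submodule `U ≤ V` is a subcomodule if the coaction restricts to it,
i.e. maps `U` into the image of `U ⊗ C` in `V ⊗ C`. -/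
def IsSubcomod {V : Type u} [AddCommGroup V] [Module k V]
    (ρ : V →ₗ[k] V ⊗[k] C) (U : Submodule k V) : Prop :=
  ∀ u ∈ U, ρ u ∈ LinearMap.range ((U.subtype).rTensor C)

/-- A simple subcomodule: a nonzero subcomodule with no nonzero proper
subcomodules below it. -/
def IsSimpleSubcomod {V : Type u} [AddCommGroup V] [Module k V]
    (ρ : V →ₗ[k] V ⊗[k] C) (U : Submodule k V) : Prop :=
  IsSubcomod k C ρ U ∧ U ≠ ⊥ ∧
    ∀ U' : Submodule k V, U' ≤ U → IsSubcomod k C ρ U' → U' = ⊥ ∨ U' = U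

/-- A comodule is simple if it is simple as a subcomodule of itself. -/
def IsSimpleComod {V : Type u} [AddCommGroup V] [Module k V]
    (ρ : V →ₗ[k] V ⊗[k] C) : Prop :=
  IsSimpleSubcomod k C ρ ⊤

/-- Morphisms of right `C`-comodules. -/
def IsComodHom {V W : Type u} [AddCommGroup V] [Module k V]
    [AddCommGroup W] [Module k W]
    (ρV : V →ₗ[k] V ⊗[k] C) (ρW : W →ₗ[k] W ⊗[k] C) (f : V →ₗ[k] W) : Prop :=
  ρW ∘ₗ f = (f.rTensor C) ∘ₗ ρV

/-- `C` is cosemisimple: every right `C`-comodule is an (internal) direct sum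
of simple subcomodules. -/
def IsCosemisimple : Prop :=
  ∀ (V : Type u) [AddCommGroup V] [Module k V]
    (ρ : V →ₗ[k] V ⊗[k] C), IsComod k C ρ →
    ∃ (ι : Type u) (U : ι → Submodule k V),
      (∀ i, IsSimpleSubcomod k C ρ (U i)) ∧
      iSupIndep U ∧ (⨆ i, U i) = ⊤

/-- Subcoalgebras of `C`, as submodules. -/
def IsSubcoalgebra (D : Submodule k C) : Prop :=
  ∀ x ∈ D, Coalgebra.comul (R := k) x ∈
    LinearMap.range (TensorProduct.map D.subtype D.subtype)

/-- Simple subcoalgebras: nonzero ones with no nonzero proper subcoalgebras. -/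
def IsSimpleSubcoalgebra (D : Submodule k C) : Prop :=
  IsSubcoalgebra k C D ∧ D ≠ ⊥ ∧
    ∀ D' : Submodule k C, D' ≤ D → IsSubcoalgebra k C D' → D' = ⊥ ∨ D' = D

/-- The coefficient space of a comodule: the smallest submodule `D ≤ C` such
that the coaction factors through `V ⊗ D`.  For a simple comodule this is its
coefficient coalgebra. -/
def coeffSpace {V : Type u} [AddCommGroup V] [Module k V]
    (ρ : V →ₗ[k] V ⊗[k] C) : Submodule k C :=
  sInf {D : Submodule k C | ∀ v : V, ρ v ∈ LinearMap.range ((D.subtype).lTensor V)}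

/-- Corestriction of a coaction along a linear map of coalgebras `π : C → D`. -/
noncomputable def cores {D : Type u} [AddCommGroup D] [Module k D]
    {V : Type u} [AddCommGroup V] [Module k V]
    (π : C →ₗ[k] D) (ρ : V →ₗ[k] V ⊗[k] C) : V →ₗ[k] V ⊗[k] D :=
  (π.lTensor V) ∘ₗ ρ

end Coalg

section Bialg

variable (H : Type u) [Ring H] [Bialgebra k H]

/-- An invariant vector for a coaction of a bialgebra. -/
def IsInvariant {V : Type u} [AddCommGroup V] [Module k V]
    (ρ : V →ₗ[k] V ⊗[k] H) (v : V) : Prop :=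
  ρ v = v ⊗ₜ[k] (1 : H)

/-- The tensor product coaction on `V ⊗ W` for a bialgebra `H`:
`v ⊗ w ↦ (v₀ ⊗ w₀) ⊗ v₁w₁`. -/
noncomputable def tensorCoact {V W : Type u}
    [AddCommGroup V] [Module k V] [AddCommGroup W] [Module k W]
    (ρV : V →ₗ[k] V ⊗[k] H) (ρW : W →ₗ[k] W ⊗[k] H) :
    (V ⊗[k] W) →ₗ[k] (V ⊗[k] W) ⊗[k] H :=
  ((LinearMap.mul' k H).lTensor (V ⊗[k] W)) ∘ₗ
    (TensorProduct.tensorTensorTensorComm k V H W H).toLinearMap ∘ₗ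
    (TensorProduct.map ρV ρW)

/-- `O(G/H)`: the right coinvariants `{x | (id ⊗ π)Δ(x) = x ⊗ 1}` of a
quotient map `π`. -/
noncomputable def quotientSpaceLeft {B : Type u} [AddCommGroup B] [Module k B] [One B]
    (π : H →ₗ[k] B) : Submodule k H :=
  LinearMap.ker ((π.lTensor H) ∘ₗ (Coalgebra.comul (R := k) (A := H)) -
    (TensorProduct.mk k H B).flip 1)

/-- `O(H\G)`: the left coinvariants `{x | (π ⊗ id)Δ(x) = 1 ⊗ x}`. -/
noncomputable def quotientSpaceRight {B : Type u} [AddCommGroup B] [Module k B] [One B]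
    (π : H →ₗ[k] B) : Submodule k H :=
  LinearMap.ker ((π.rTensor H) ∘ₗ (Coalgebra.comul (R := k) (A := H)) -
    (TensorProduct.mk k B H) 1)

end Bialg

section Hopf

variable (H : Type u) [Ring H] [HopfAlgebra k H]

/-- Iterated comultiplication `x ↦ x₁ ⊗ (x₂ ⊗ x₃)`. -/
noncomputable def comul2 : H →ₗ[k] H ⊗[k] (H ⊗[k] H) :=
  ((Coalgebra.comul (R := k) (A := H)).lTensor H) ∘ₗ (Coalgebra.comul (R := k) (A := H))

/-- The right adjoint coaction `x ↦ x₂ ⊗ S(x₁)x₃`. -/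
noncomputable def adR : H →ₗ[k] H ⊗[k] H :=
  ((LinearMap.mul' k H).lTensor H) ∘ₗ
    (TensorProduct.assoc k H H H).toLinearMap ∘ₗ
    (((TensorProduct.comm k H H).toLinearMap).rTensor H) ∘ₗ
    (TensorProduct.assoc k H H H).symm.toLinearMap ∘ₗ
    ((HopfAlgebra.antipode (R := k) (A := H)).rTensor (H ⊗[k] H)) ∘ₗ
    comul2 k H

/-- The left adjoint coaction `x ↦ x₁S(x₃) ⊗ x₂` (a left coaction, with the
coacting tensorand on the left). -/
noncomputable def adL : H →ₗ[k] H ⊗[k] H :=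
  ((LinearMap.mul' k H).rTensor H) ∘ₗ
    (TensorProduct.assoc k H H H).symm.toLinearMap ∘ₗ
    (((TensorProduct.comm k H H).toLinearMap).lTensor H) ∘ₗ
    (((HopfAlgebra.antipode (R := k) (A := H)).lTensor H).lTensor H) ∘ₗ
    comul2 k H

variable {B : Type u} [AddCommGroup B] [Module k B]

/-- `π : O(G) → O(H)` is right-normal: it is a morphism of right
`O(G)`-comodules for the right adjoint coaction, i.e. the right adjoint
coaction descends along `π`. -/
def IsRightNormal (π : H →ₗ[k] B) : Prop :=
  ∃ ρ : B →ₗ[k] B ⊗[k] H, ρ ∘ₗ π = (π.rTensor H) ∘ₗ adR k H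

/-- `π : O(G) → O(H)` is left-normal: the left adjoint coaction descends
along `π`. -/
def IsLeftNormal (π : H →ₗ[k] B) : Prop :=
  ∃ lam : B →ₗ[k] H ⊗[k] B, lam ∘ₗ π = (π.lTensor H) ∘ₗ adL k H

end Hopf

end QG

namespace QG

variable (k : Type u) [Field k]

section Coalg2

variable (C : Type u) [AddCommGroup C] [Module k C] [Coalgebra k C]

/-- A bundled simple right `C`-comodule. -/
structure SimpleComodule where
  V : Type u
  [addCommGroup : AddCommGroup V]
  [module : Module k V]
  ρ : V →ₗ[k] V ⊗[k] C
  isComod : IsComod k C ρ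
  isSimple : IsSimpleComod k C ρ

attribute [instance] SimpleComodule.addCommGroup SimpleComodule.module

/-- A simple comodule `(T, ρT)` is a constituent of a comodule `(V, ρV)`
(over a cosemisimple coalgebra) iff there is a nonzero comodule map `T → V`. -/
def IsConstituent {T V : Type u} [AddCommGroup T] [Module k T]
    [AddCommGroup V] [Module k V]
    (ρT : T →ₗ[k] T ⊗[k] C) (ρV : V →ₗ[k] V ⊗[k] C) : Prop :=
  ∃ f : T →ₗ[k] V, f ≠ 0 ∧ IsComodHom k C ρT ρV f

/-- Isomorphism of (simple) comodules. -/
def comodIsoRel (X Y : SimpleComodule k C) : Prop :=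
  ∃ e : X.V ≃ₗ[k] Y.V, IsComodHom k C X.ρ Y.ρ e.toLinearMap

/-- The set `Ĉ` of isomorphism classes of simple right `C`-comodules. -/
def SimpleComodQuot := Quot (comodIsoRel k C)

/-- The isomorphism class of a simple comodule. -/
def SimpleComodule.cls (X : SimpleComodule k C) : SimpleComodQuot k C :=
  Quot.mk _ X

/-- Group-like elements of a coalgebra; these correspond to the
one-dimensional comodules, i.e. to characters. -/
def IsGroupLike (a : C) : Prop :=
  Coalgebra.counit (R := k) (A := C) a = (1 : k) ∧
    Coalgebra.comul (R := k) (A := C) a = a ⊗ₜ[k] a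

/-- A linear map `φ : C → Z` out of a coalgebra is central if
`φ(x₁) ⊗ x₂ = φ(x₂) ⊗ x₁`. -/
def IsCentralMap {Z : Type u} [AddCommGroup Z] [Module k Z] (φ : C →ₗ[k] Z) : Prop :=
  (φ.rTensor C) ∘ₗ (Coalgebra.comul (R := k) (A := C)) =
    (φ.rTensor C) ∘ₗ (TensorProduct.comm k C C).toLinearMap ∘ₗ
      (Coalgebra.comul (R := k) (A := C))

/-- The simple comodule `X` has "central character" `g` with respect to the
quotient map `γ : C → Z`: corestricted along `γ`, the coaction on `X` is a sum
of copies of the character `g`. -/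
def HasCentralChar {Z : Type u} [AddCommGroup Z] [Module k Z]
    (γ : C →ₗ[k] Z) (X : SimpleComodule k C) (g : Z) : Prop :=
  ∀ v : X.V, cores k C γ X.ρ v = v ⊗ₜ[k] g

end Coalg2

/-- The k-span of the set of products `g * a`, `a ∈ Am`; for `Am` a submodule
this is the left ideal generated by `Am`. -/
def leftIdealGen {G : Type u} [Ring G] [Module k G] (Am : Submodule k G) :
    Submodule k G :=
  Submodule.span k {x : G | ∃ g : G, ∃ a ∈ Am, x = g * a}

end QG

namespace QGP
open QG HopfAlgebra

section MM
variable {k : Type u} [Field k]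

/-- multiplicative matrices -/
structure IsMM {C : Type u} [AddCommGroup C] [Module k C] [Coalgebra k C]
    {n : Type u} [Fintype n] [DecidableEq n] (c : Matrix n n C) : Prop where
  comul : ∀ i j, Coalgebra.comul (R := k) (c i j) = ∑ l, c i l ⊗ₜ[k] c l j
  counit : ∀ i j, Coalgebra.counit (R := k) (c i j) = if i = j then (1 : k) else 0

variable {A : Type u} [Ring A] [HopfAlgebra k A]
  {n : Type u} [Fintype n] [DecidableEq n]

theorem IsMM.mul_S {c : Matrix n n A} (hc : IsMM (k := k) c) :
    c * c.map (antipode k) = 1 := by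
  ext i j
  have h := mul_antipode_lTensor_comul_apply (R := k) (c i j)
  rw [hc.comul, hc.counit] at h
  simp only [map_sum, LinearMap.lTensor_tmul, LinearMap.mul'_apply] at h
  rw [Matrix.mul_apply]
  simp only [Matrix.map_apply, h, Matrix.one_apply]
  split_ifs <;> simp

theorem IsMM.S_mul {c : Matrix n n A} (hc : IsMM (k := k) c) :
    c.map (antipode k) * c = 1 := by
  ext i j
  have h := mul_antipode_rTensor_comul_apply (R := k) (c i j)
  rw [hc.comul, hc.counit] at h
  simp only [map_sum, LinearMap.rTensor_tmul, LinearMap.mul'_apply] at h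
  rw [Matrix.mul_apply]
  simp only [Matrix.map_apply, h, Matrix.one_apply]
  split_ifs <;> simp

theorem IsMM.map {B : Type u} [Ring B] [HopfAlgebra k B] (π : A →ₐc[k] B)
    {c : Matrix n n A} (hc : IsMM (k := k) c) : IsMM (k := k) (c.map π) := by
  constructor
  · intro i j
    have := CoalgHomClass.map_comp_comul_apply π (c i j)
    rw [hc.comul] at this
    simp only [Matrix.map_apply, ← this, map_sum, map_tmul]
    rfl
  · intro i j
    rw [← hc.counit]
    exact CoalgHomClass.counit_comp_apply π (c i j)

/-- `Δ(S c)`. -/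
theorem IsMM.comul_S {c : Matrix n n A} (hc : IsMM (k := k) c) (i j : n) :
    Coalgebra.comul (R := k) (antipode k (c i j)) =
      ∑ l, antipode k (c l j) ⊗ₜ[k] antipode k (c i l) := by
  let D : A →ₐ[k] A ⊗[k] A := Bialgebra.comulAlgHom k A
  let l1 : A →ₐ[k] A ⊗[k] A := Algebra.TensorProduct.includeLeft
  let l2 : A →ₐ[k] A ⊗[k] A := Algebra.TensorProduct.includeRight
  have e1 : (c.map D) = c.map l1 * c.map l2 := by
    ext i j
    simp only [Matrix.map_apply, Matrix.mul_apply]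
    refine (hc.comul i j).trans ?_
    simp [l1, l2]
  have e2 : ((c.map (antipode k)).map D) * c.map D = 1 := by
    have := congrArg (fun M => M.map D) hc.S_mul
    simpa [Matrix.map_mul] using this
  have m1 : c.map l1 * (c.map (antipode k)).map l1 = 1 := by
    have := congrArg (fun M => M.map l1) hc.mul_S
    simpa [Matrix.map_mul] using this
  have m2 : c.map l2 * (c.map (antipode k)).map l2 = 1 := by
    have := congrArg (fun M => M.map l2) hc.mul_S
    simpa [Matrix.map_mul] using this
  have e3 : c.map D * ((c.map (antipode k)).map l2 * (c.map (antipode k)).map l1) = 1 := by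
    rw [e1, Matrix.mul_assoc, ← Matrix.mul_assoc (c.map l2), m2, Matrix.one_mul, m1]
  have e4 := left_inv_eq_right_inv e2 e3
  have := congrFun (congrFun e4 i) j
  refine this.trans ?_
  simp [Matrix.mul_apply, l1, l2]

theorem IsMM.counit_S {c : Matrix n n A} (hc : IsMM (k := k) c) (i j : n) :
    Coalgebra.counit (R := k) (antipode k (c i j)) = if i = j then (1 : k) else 0 := by
  let D : A →ₐ[k] k := Bialgebra.counitAlgHom k A
  have e1 : c.map D = 1 := by
    ext i j
    simpa [Matrix.one_apply, D] using hc.counit i j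
  have e2 : ((c.map (antipode k)).map D) * c.map D = 1 := by
    have := congrArg (fun M => M.map D) hc.S_mul
    simpa [Matrix.map_mul] using this
  rw [e1, Matrix.mul_one] at e2
  have := congrFun (congrFun e2 i) j
  simpa [Matrix.one_apply, D] using this

/-- the contragredient -/
theorem IsMM.contra {c : Matrix n n A} (hc : IsMM (k := k) c) :
    IsMM (k := k) (fun i j => antipode k (c j i) : Matrix n n A) := by
  constructor
  · intro i j; rw [hc.comul_S]
  · intro i j; rw [hc.counit_S]; simp [eq_comm]

theorem IsMM.map_S {B : Type u} [Ring B] [HopfAlgebra k B] (π : A →ₐc[k] B)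
    {c : Matrix n n A} (hc : IsMM (k := k) c) (i j : n) :
    π (antipode k (c i j)) = antipode k (π (c i j)) := by
  have e2 : ((c.map (antipode k)).map π) * c.map π = 1 := by
    have := congrArg (fun M => M.map (π : A →ₐ[k] B)) hc.S_mul
    rw [Matrix.map_mul] at this
    simpa using this
  have e4 := left_inv_eq_right_inv e2 (hc.map π).mul_S
  exact congrFun (congrFun e4 i) j

/-- `c_{ki} S(c_{jl})`. -/
noncomputable def adj (k : Type u) [Field k] {A : Type u} [Ring A] [HopfAlgebra k A] {n : Type u}
    (c : Matrix n n A) : Matrix (n × n) (n × n) A :=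
  fun p q => c p.1 q.1 * antipode k (c q.2 p.2)

theorem IsMM.adj {c : Matrix n n A} (hc : IsMM (k := k) c) : IsMM (k := k) (adj k c) := by
  constructor
  · rintro ⟨a, b⟩ ⟨i, j⟩
    simp only [QGP.adj]
    rw [Bialgebra.comul_mul, hc.comul, hc.comul_S, Finset.sum_mul_sum, Fintype.sum_prod_type]
    simp
  · rintro ⟨a, b⟩ ⟨i, j⟩
    simp only [QGP.adj]
    rw [Bialgebra.counit_mul, hc.counit, hc.counit_S]
    by_cases h : a = i <;> by_cases h' : b = j <;> simp [h, h', eq_comm]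

theorem IsMM.comul2 {c : Matrix n n A} (hc : IsMM (k := k) c) (i j : n) :
    comul2 k A (c i j) = ∑ a, ∑ b, c i a ⊗ₜ[k] (c a b ⊗ₜ[k] c b j) := by
  simp [QG.comul2, hc.comul, TensorProduct.tmul_sum]

theorem IsMM.adL {c : Matrix n n A} (hc : IsMM (k := k) c) (i j : n) :
    adL k A (c i j) = ∑ a, ∑ b, (c i a * antipode k (c b j)) ⊗ₜ[k] c a b := by
  simp [QG.adL, hc.comul2]

theorem IsMM.adR {c : Matrix n n A} (hc : IsMM (k := k) c) (i j : n) :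
    adR k A (c i j) = ∑ a, ∑ b, c a b ⊗ₜ[k] (antipode k (c i a) * c b j) := by
  simp [QG.adR, hc.comul2]

end MM
end QGP

namespace QGP
open QG HopfAlgebra

section Act
variable {k : Type u} [Field k] {C : Type u} [AddCommGroup C] [Module k C]
  {V : Type u} [AddCommGroup V] [Module k V]

/-- slice of a tensor -/
noncomputable def sl (f : Module.Dual k C) : V ⊗[k] C →ₗ[k] V :=
  (TensorProduct.rid k V).toLinearMap ∘ₗ f.lTensor V

@[simp] theorem sl_tmul (f : Module.Dual k C) (v : V) (c : C) : sl f (v ⊗ₜ[k] c) = f c • v := by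
  simp [sl]

/-- the action of a functional on a comodule -/
noncomputable def act (ρ : V →ₗ[k] V ⊗[k] C) : Module.Dual k C →ₗ[k] V →ₗ[k] V where
  toFun f := sl f ∘ₗ ρ
  map_add' f g := by simp [sl, LinearMap.lTensor_add, LinearMap.comp_add, LinearMap.add_comp]
  map_smul' a g := by simp [sl, LinearMap.lTensor_smul, LinearMap.comp_smul, LinearMap.smul_comp]

theorem act_apply (ρ : V →ₗ[k] V ⊗[k] C) (f : Module.Dual k C) (v : V) :
    act ρ f v = sl f (ρ v) := rfl

theorem sl_sep (z : V ⊗[k] C) (h : ∀ f : Module.Dual k C, sl f z = 0) : z = 0 := by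
  classical
  let b := Module.Basis.ofVectorSpace k C
  have key : z = ∑ i ∈ ((TensorProduct.equivFinsuppOfBasisRight b) z).support,
      (sl (b.coord i) z) ⊗ₜ[k] b i := by
    have := TensorProduct.eq_repr_basis_right b z
    obtain ⟨c, hc⟩ := this
    have h2 : ∀ i, sl (b.coord i) z = c i := by
      intro i
      rw [← hc]
      simp [Finsupp.sum, Finsupp.single_apply]
      intro h; exact h.symm
    have h0 : c = 0 := by
      ext i; rw [← h2, h]; simp
    rw [← hc, h0]; simp
  rw [key]; simp [h]

theorem mem_range_rTensor (U : Submodule k V) (z : V ⊗[k] C) :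
    z ∈ LinearMap.range (U.subtype.rTensor C) ↔ ∀ f : Module.Dual k C, sl f z ∈ U := by
  constructor
  · rintro ⟨y, rfl⟩ f
    induction y with
    | zero => simp
    | tmul u c => simpa using U.smul_mem _ u.2
    | add a b ha hb => simp only [map_add]; exact U.add_mem ha hb
  · intro h
    have ex := rTensor_exact C (LinearMap.exact_subtype_mkQ U) U.mkQ_surjective
    refine (ex z).1 ?_
    refine sl_sep _ fun f => ?_
    have : sl f ((LinearMap.rTensor C U.mkQ) z) = U.mkQ (sl f z) := by
      clear h
      induction z with
      | zero => simp
      | tmul u c => simp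
      | add a b ha hb => simp only [map_add, ha, hb]
    rw [this]
    simpa using h f

variable [Coalgebra k C]

theorem isSubcomod_iff (ρ : V →ₗ[k] V ⊗[k] C) (U : Submodule k V) :
    IsSubcomod k C ρ U ↔ ∀ f : Module.Dual k C, ∀ u ∈ U, act ρ f u ∈ U := by
  constructor
  · intro h f u hu
    exact (mem_range_rTensor U _).1 (h u hu) f
  · intro h u hu
    exact (mem_range_rTensor U _).2 fun f => h f u hu

/-- convolution -/
noncomputable def conv (f g : Module.Dual k C) : Module.Dual k C :=
  LinearMap.mul' k k ∘ₗ TensorProduct.map f g ∘ₗ Coalgebra.comul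

theorem act_act {ρ : V →ₗ[k] V ⊗[k] C} (hρ : IsComod k C ρ) (f g : Module.Dual k C) (v : V) :
    act ρ f (act ρ g v) = act ρ (conv f g) v := by
  have h := congrArg (fun z => sl f (sl g z)) (hρ.coassoc v)
  have e1 : ∀ z : V ⊗[k] C, sl g (ρ.rTensor C z) = ρ (sl g z) := by
    intro z
    induction z with
    | zero => simp
    | tmul u c => simp
    | add a b ha hb => simp only [map_add, ha, hb]
  have e2 : ∀ z : V ⊗[k] (C ⊗[k] C), sl f (sl g ((TensorProduct.assoc k V C C).symm z)) =
      sl (LinearMap.mul' k k ∘ₗ TensorProduct.map f g) z := by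
    intro z
    induction z with
    | zero => simp
    | tmul u c =>
      induction c with
      | zero => simp
      | tmul a b => simp [mul_smul, smul_comm (f a)]
      | add a b ha hb => simp only [TensorProduct.tmul_add, map_add, ha, hb]
    | add a b ha hb => simp only [map_add, ha, hb]
  have e3 : ∀ z : V ⊗[k] C, sl (LinearMap.mul' k k ∘ₗ TensorProduct.map f g)
      ((Coalgebra.comul (R := k) (A := C)).lTensor V z) = sl (conv f g) z := by
    intro z
    induction z with
    | zero => simp
    | tmul u c => simp [conv]
    | add a b ha hb => simp only [map_add, ha, hb]
  rw [e1] at h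
  erw [e2] at h
  rw [e3] at h
  exact h

theorem act_counit {ρ : V →ₗ[k] V ⊗[k] C} (hρ : IsComod k C ρ) (v : V) :
    act ρ Coalgebra.counit v = v := hρ.counit v

/-- the cyclic subcomodule -/
noncomputable def cyc (ρ : V →ₗ[k] V ⊗[k] C) (v : V) : Submodule k V :=
  LinearMap.range ((act ρ).flip v)

theorem mem_cyc {ρ : V →ₗ[k] V ⊗[k] C} (hρ : IsComod k C ρ) (v : V) : v ∈ cyc ρ v :=
  ⟨Coalgebra.counit, act_counit hρ v⟩

theorem cyc_stable {ρ : V →ₗ[k] V ⊗[k] C} (hρ : IsComod k C ρ) (v : V) (f : Module.Dual k C)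
    (u : V) (hu : u ∈ cyc ρ v) : act ρ f u ∈ cyc ρ v := by
  obtain ⟨g, rfl⟩ := hu
  exact ⟨conv f g, (act_act hρ f g v).symm⟩

theorem cyc_finite (ρ : V →ₗ[k] V ⊗[k] C) (v : V) : Module.Finite k (cyc ρ v) := by
  obtain ⟨s, hs⟩ := TensorProduct.exists_finset (ρ v)
  classical
  have : cyc ρ v ≤ Submodule.span k ((s.image Prod.fst : Finset V) : Set V) := by
    rintro _ ⟨f, rfl⟩
    change sl f (ρ v) ∈ _
    rw [hs, map_sum]
    refine Submodule.sum_mem _ fun p hp => ?_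
    rw [sl_tmul]
    refine Submodule.smul_mem _ _ (Submodule.subset_span ?_)
    simp only [Finset.coe_image, Set.mem_image, Finset.mem_coe]
    exact ⟨p, hp, rfl⟩
  exact Submodule.finiteDimensional_of_le this

/-- a stable f.d. subspace with a basis gives a multiplicative matrix. -/
theorem exists_MM {ρ : V →ₗ[k] V ⊗[k] C} (hρ : IsComod k C ρ) (U : Submodule k V)
    (hU : ∀ f : Module.Dual k C, ∀ u ∈ U, act ρ f u ∈ U)
    {n : Type u} [Fintype n] [DecidableEq n] (e : Module.Basis n k U) :
    ∃ c : Matrix n n C, IsMM (k := k) c ∧ ∀ j, ρ (e j) = ∑ i, (e i : V) ⊗ₜ[k] c i j := by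
  have h1 : ∀ j, ∃ c : n → C, ρ (e j) = ∑ i, (e i : V) ⊗ₜ[k] c i := by
    intro j
    obtain ⟨y, hy⟩ := (isSubcomod_iff ρ U).2 hU (e j) (e j).2
    obtain ⟨c, hc⟩ := TensorProduct.eq_repr_basis_left e y
    refine ⟨c, ?_⟩
    rw [← hy, ← hc, Finsupp.sum_fintype _ _ (by simp)]
    simp
  choose c hc using h1
  have li : LinearIndependent k (fun i => (e i : V)) :=
    e.linearIndependent.map' U.subtype (Submodule.ker_subtype U)
  have inj : ∀ x y : n → C, ∑ i, (e i : V) ⊗ₜ[k] x i = ∑ i, (e i : V) ⊗ₜ[k] y i → x = y := by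
    intro x y h
    funext i
    rw [← sub_eq_zero]
    rw [← Module.forall_dual_apply_eq_zero_iff k]
    intro f
    have := congrArg (sl f) h
    simp only [map_sum, sl_tmul] at this
    rw [← sub_eq_zero, ← Finset.sum_sub_distrib] at this
    simp only [← sub_smul] at this
    have := Fintype.linearIndependent_iff.1 li _ this i
    simpa using this
  have inj2 : ∀ x y : n → C ⊗[k] C, ∑ i, (e i : V) ⊗ₜ[k] x i = ∑ i, (e i : V) ⊗ₜ[k] y i →
      x = y := by
    intro x y h
    funext i
    rw [← sub_eq_zero]
    rw [← Module.forall_dual_apply_eq_zero_iff k]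
    intro f
    have := congrArg (sl f) h
    simp only [map_sum, sl_tmul] at this
    rw [← sub_eq_zero, ← Finset.sum_sub_distrib] at this
    simp only [← sub_smul] at this
    have := Fintype.linearIndependent_iff.1 li _ this i
    simpa using this
  refine ⟨fun i j => c j i, ⟨?_, ?_⟩, hc⟩
  · intro i j
    have h := congrArg (TensorProduct.assoc k V C C) (hρ.coassoc (e j))
    simp only [LinearEquiv.coe_coe, LinearEquiv.apply_symm_apply, hc, map_sum, LinearMap.rTensor_tmul,
      LinearMap.lTensor_tmul, TensorProduct.sum_tmul, TensorProduct.assoc_tmul] at h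
    rw [Finset.sum_comm] at h
    simp only [← TensorProduct.tmul_sum] at h
    exact (congrFun (inj2 _ _ h) i).symm
  · intro i j
    have h := hρ.counit (e j)
    simp only [hc, map_sum, LinearMap.lTensor_tmul, TensorProduct.rid_tmul] at h
    have h' : ∑ i, (Coalgebra.counit (R := k) (c j i) - if i = j then (1:k) else 0) • (e i : V) = 0 := by
      simp only [sub_smul, Finset.sum_sub_distrib, h]
      simp
    have := Fintype.linearIndependent_iff.1 li _ h' i
    exact sub_eq_zero.1 this

end Act

section Reg
variable {k : Type u} [Field k] {C : Type u} [AddCommGroup C] [Module k C] [Coalgebra k C]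

theorem reg_comod : IsComod k C (Coalgebra.comul (R := k) (A := C)) := by
  constructor
  · intro v
    exact (Coalgebra.coassoc_symm_apply v).symm
  · intro v
    rw [Coalgebra.lTensor_counit_comul]; simp

theorem reg_basis {n : Type u} [Fintype n] (e : n → C) (c : Matrix n n C)
    (h : ∀ j, Coalgebra.comul (R := k) (e j) = ∑ i, e i ⊗ₜ[k] c i j) (j : n) :
    e j = ∑ i, Coalgebra.counit (R := k) (e i) • c i j := by
  have := Coalgebra.rTensor_counit_comul (R := k) (e j)
  rw [h] at this
  have := congrArg (TensorProduct.lid k C) this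
  simpa using this.symm

/-- entries of multiplicative matrices span -/
theorem mem_span_MM (a : C) : a ∈ Submodule.span k {x : C | ∃ (n : Type u) (_ : Fintype n)
    (_ : DecidableEq n) (c : Matrix n n C) (i j : n), IsMM (k := k) c ∧ x = c i j} := by
  classical
  have hρ := reg_comod (k := k) (C := C)
  have := cyc_finite (Coalgebra.comul (R := k) (A := C)) a
  let e := Module.Free.chooseBasis k (cyc (Coalgebra.comul (R := k) (A := C)) a)
  obtain ⟨c, hc, h⟩ := exists_MM hρ _ (cyc_stable hρ a) e
  have ha : a = ∑ j, e.repr ⟨a, mem_cyc hρ a⟩ j • (e j : C) := by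
    have := congrArg (Submodule.subtype _) (e.sum_repr ⟨a, mem_cyc hρ a⟩)
    rw [map_sum] at this
    exact this.symm
  rw [ha]
  refine Submodule.sum_mem _ fun j _ => Submodule.smul_mem _ _ ?_
  rw [reg_basis (fun j => (e j : C)) c h j]
  refine Submodule.sum_mem _ fun i _ => Submodule.smul_mem _ _ (Submodule.subset_span ?_)
  exact ⟨_, _, _, c, i, j, hc, rfl⟩

theorem ext_MM {W : Type u} [AddCommGroup W] [Module k W] {f g : C →ₗ[k] W}
    (h : ∀ (n : Type u) [Fintype n] [DecidableEq n] (c : Matrix n n C) (i j : n),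
      IsMM (k := k) c → f (c i j) = g (c i j)) : f = g := by
  ext a
  refine LinearMap.eqOn_span (s := _) ?_ (mem_span_MM (k := k) a)
  rintro _ ⟨n, _, _, c, i, j, hc, rfl⟩
  exact h n c i j hc

end Reg
end QGP

namespace QGP
open QG HopfAlgebra

section Normal
variable {k : Type u} [Field k] {G H : Type u} [Ring G] [HopfAlgebra k G] [Ring H] [HopfAlgebra k H]
  (π : G →ₐc[k] H)

theorem left_to_right
    (hinv : ∀ x : G, antipode (R := k) (A := G) (antipode (R := k) (A := G) x) = x)
    (h : IsLeftNormal k G (π : G →ₗ[k] H)) :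
    IsRightNormal k G (π : G →ₗ[k] H) := by
  obtain ⟨lam, hl⟩ := h
  refine ⟨(TensorProduct.comm k G H).toLinearMap ∘ₗ
    TensorProduct.map (antipode k) (antipode k) ∘ₗ lam ∘ₗ antipode k, ?_⟩
  refine ext_MM (k := k) fun n _ _ c i j hc => ?_
  have h1 := LinearMap.congr_fun hl (antipode k (c i j))
  have h2 := hc.contra.adL j i
  simp only [LinearMap.comp_apply] at h1
  rw [h2] at h1
  simp only [LinearMap.comp_apply, hc.adR]
  have h3 : (antipode k) ((π : G →ₗ[k] H) (c i j)) = (π : G →ₗ[k] H) (antipode k (c i j)) :=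
    (hc.map_S π i j).symm
  have h4 : ∀ a b, (antipode k) ((π : G →ₗ[k] H) (antipode k (c a b))) = (π : G →ₗ[k] H) (c a b) := by
    intro a b
    have := hc.contra.map_S π b a
    simp only [hinv] at this
    exact this.symm
  rw [h3, h1]
  simp only [map_sum, LinearMap.lTensor_tmul, TensorProduct.map_tmul, LinearMap.rTensor_tmul,
    LinearEquiv.coe_coe, TensorProduct.comm_tmul, antipode_mul_antidistrib, hinv, h4]
  rw [Finset.sum_comm]

theorem right_to_left
    (hinv : ∀ x : G, antipode (R := k) (A := G) (antipode (R := k) (A := G) x) = x)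
    (h : IsRightNormal k G (π : G →ₗ[k] H)) :
    IsLeftNormal k G (π : G →ₗ[k] H) := by
  obtain ⟨lam, hl⟩ := h
  refine ⟨(TensorProduct.comm k H G).toLinearMap ∘ₗ
    TensorProduct.map (antipode k) (antipode k) ∘ₗ lam ∘ₗ antipode k, ?_⟩
  refine ext_MM (k := k) fun n _ _ c i j hc => ?_
  have h1 := LinearMap.congr_fun hl (antipode k (c i j))
  have h2 := hc.contra.adR j i
  simp only [LinearMap.comp_apply] at h1
  rw [h2] at h1
  simp only [LinearMap.comp_apply, hc.adL]
  have h3 : (antipode k) ((π : G →ₗ[k] H) (c i j)) = (π : G →ₗ[k] H) (antipode k (c i j)) :=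
    (hc.map_S π i j).symm
  have h4 : ∀ a b, (antipode k) ((π : G →ₗ[k] H) (antipode k (c a b))) = (π : G →ₗ[k] H) (c a b) := by
    intro a b
    have := hc.contra.map_S π b a
    simp only [hinv] at this
    exact this.symm
  rw [h3, h1]
  simp only [map_sum, LinearMap.lTensor_tmul, TensorProduct.map_tmul, LinearMap.rTensor_tmul,
    LinearEquiv.coe_coe, TensorProduct.comm_tmul, antipode_mul_antidistrib, hinv, h4]
  rw [Finset.sum_comm]

end Normal
end QGP

namespace QGP
open QG HopfAlgebra

section CMod
variable {k : Type u} [Field k] {C : Type u} [AddCommGroup C] [Module k C]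

/-- The underlying space of a coaction as a module over a free algebra. -/
def CMod {V : Type u} [AddCommGroup V] [Module k V] (_ρ : V →ₗ[k] V ⊗[k] C) : Type u := V

/-- The acting ring -/
abbrev FA (k : Type u) [Field k] (C : Type u) [AddCommGroup C] [Module k C] : Type u :=
  FreeAlgebra k (Module.Dual k C)

variable {V : Type u} [AddCommGroup V] [Module k V] (ρ : V →ₗ[k] V ⊗[k] C)

noncomputable instance : AddCommGroup (CMod ρ) := inferInstanceAs (AddCommGroup V)
noncomputable instance : Module k (CMod ρ) := inferInstanceAs (Module k V)

/-- the action hom -/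
noncomputable def actHom : FA k C →ₐ[k] Module.End k V :=
  FreeAlgebra.lift k (fun f => act ρ f)

noncomputable instance : Module (FA k C) (CMod ρ) :=
  Module.compHom V (actHom ρ).toRingHom

theorem CMod.smul_def (r : FA k C) (v : CMod ρ) : r • v = (actHom ρ r : Module.End k V) v := rfl

theorem CMod.ι_smul (f : Module.Dual k C) (v : CMod ρ) :
    (FreeAlgebra.ι k f : FA k C) • v = act ρ f (v : V) := by
  rw [CMod.smul_def]; simp [actHom]; rfl

theorem CMod.algebraMap_smul (a : k) (v : CMod ρ) :
    (algebraMap k (FA k C) a) • v = a • v := by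
  rw [CMod.smul_def, AlgHom.commutes]; rfl

instance : IsScalarTower k (FA k C) (CMod ρ) :=
  IsScalarTower.of_algebraMap_smul (CMod.algebraMap_smul ρ)

/-- submodule from stable subspace -/
noncomputable def toSub (U : Submodule k V) (hU : ∀ f : Module.Dual k C, ∀ u ∈ U, act ρ f u ∈ U) :
    Submodule (FA k C) (CMod ρ) where
  carrier := (U : Set V)
  add_mem' := U.add_mem
  zero_mem' := U.zero_mem
  smul_mem' := by
    intro r
    induction r using FreeAlgebra.induction with
    | grade0 r => intro x hx; rw [CMod.algebraMap_smul]; exact U.smul_mem r hx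
    | grade1 f => intro x hx; rw [CMod.ι_smul]; exact hU f x hx
    | mul a b ha hb => intro x hx; rw [mul_smul]; exact ha (hb hx)
    | add a b ha hb => intro x hx; rw [add_smul]; exact U.add_mem (ha hx) (hb hx)

/-- stable subspace from submodule -/
noncomputable def ofSub (N : Submodule (FA k C) (CMod ρ)) : Submodule k V :=
  (N.restrictScalars k : Submodule k (CMod ρ))

theorem ofSub_stable (N : Submodule (FA k C) (CMod ρ)) (f : Module.Dual k C) (u : V)
    (hu : u ∈ ofSub ρ N) : act ρ f u ∈ ofSub ρ N := by
  have := N.smul_mem (FreeAlgebra.ι k f) hu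
  exact (CMod.ι_smul ρ f u) ▸ this

theorem mem_ofSub (N : Submodule (FA k C) (CMod ρ)) (u : V) : u ∈ ofSub ρ N ↔ (u : CMod ρ) ∈ N :=
  Iff.rfl
theorem mem_toSub (U : Submodule k V) (hU : ∀ f : Module.Dual k C, ∀ u ∈ U, act ρ f u ∈ U)
    (u : CMod ρ) : u ∈ toSub ρ U hU ↔ (u : V) ∈ U :=
  Iff.rfl

theorem toHom_aux {V' : Type u} [AddCommGroup V'] [Module k V'] {ρ : V →ₗ[k] V ⊗[k] C}
    {ρ' : V' →ₗ[k] V' ⊗[k] C} (φ : V →ₗ[k] V')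
    (h : ∀ f v, φ (act ρ f v) = act ρ' f (φ v)) (r : FA k C) :
    ∀ v, φ (actHom ρ r v) = actHom ρ' r (φ v) := by
  induction r using FreeAlgebra.induction with
  | grade0 r => intro x; simp
  | grade1 f => intro x; simp [actHom, h]
  | mul a b ha hb => intro x; simp [ha, hb]
  | add a b ha hb => intro x; simp [ha, hb]

/-- hom of modules -/
noncomputable def toHom {V' : Type u} [AddCommGroup V'] [Module k V'] {ρ : V →ₗ[k] V ⊗[k] C}
    {ρ' : V' →ₗ[k] V' ⊗[k] C} (φ : V →ₗ[k] V')
    (h : ∀ f v, φ (act ρ f v) = act ρ' f (φ v)) : CMod ρ →ₗ[FA k C] CMod ρ' where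
  toFun := φ
  map_add' := φ.map_add
  map_smul' := toHom_aux φ h

variable [Coalgebra k C]

theorem simple_iff (U : Submodule k V) :
    IsSimpleSubcomod k C ρ U ↔
      ∃ hU : ∀ f : Module.Dual k C, ∀ u ∈ U, act ρ f u ∈ U, IsAtom (toSub ρ U hU) := by
  constructor
  · rintro ⟨h1, h2, h3⟩
    have hU := (isSubcomod_iff ρ U).1 h1
    refine ⟨hU, ?_, ?_⟩
    · intro h
      apply h2
      rw [eq_bot_iff]
      intro x hx
      have : (x : CMod ρ) ∈ toSub ρ U hU := hx
      rw [h] at this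
      exact this
    · intro N hN
      rcases h3 (ofSub ρ N) (fun x hx => hN.le hx)
        ((isSubcomod_iff ρ _).2 (ofSub_stable ρ N)) with h | h
      · rw [eq_bot_iff]
        intro x hx
        have : (x : V) ∈ ofSub ρ N := hx
        rw [h] at this
        exact this
      · exfalso
        apply hN.not_ge
        intro x hx
        have : (x : V) ∈ U := hx
        rw [← h] at this
        exact this
  · rintro ⟨hU, hA⟩
    refine ⟨(isSubcomod_iff ρ U).2 hU, ?_, ?_⟩
    · intro h
      apply hA.1
      rw [eq_bot_iff]
      intro x hx
      have : (x : V) ∈ U := hx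
      rw [h] at this
      exact this
    · intro U' hle h'
      have hU' := (isSubcomod_iff ρ U').1 h'
      have hle' : toSub ρ U' hU' ≤ toSub ρ U hU := fun x hx => hle hx
      rcases hA.le_iff.1 hle' with h | h
      · left
        rw [eq_bot_iff]
        intro x hx
        have : (x : CMod ρ) ∈ toSub ρ U' hU' := hx
        rw [h] at this
        exact this
      · right
        refine le_antisymm hle ?_
        intro x hx
        have : (x : CMod ρ) ∈ toSub ρ U hU := hx
        rw [← h] at this
        exact this

theorem cosemi_to (h : IsCosemisimple k C) (hρ : IsComod k C ρ) :
    IsSemisimpleModule (FA k C) (CMod ρ) := by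
  obtain ⟨ι, U, h1, -, h3⟩ := h V ρ hρ
  choose hU hA using fun i => (simple_iff ρ (U i)).1 (h1 i)
  refine isSemisimpleModule_of_isSemisimpleModule_submodule' (p := fun i => toSub ρ (U i) (hU i))
    (fun i => ?_) ?_
  · have : IsSimpleModule (FA k C) (toSub ρ (U i) (hU i)) := isSimpleModule_iff_isAtom.2 (hA i)
    infer_instance
  · rw [eq_top_iff]
    intro x _
    have : (x : V) ∈ (⨆ i, U i) := by rw [h3]; trivial
    have hle : (⨆ i, U i) ≤ ofSub ρ (⨆ i, toSub ρ (U i) (hU i)) := by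
      refine iSup_le fun i y hy => ?_
      have : toSub ρ (U i) (hU i) ≤ ⨆ i, toSub ρ (U i) (hU i) := le_iSup (fun i => toSub ρ (U i) (hU i)) i
      exact this hy
    exact hle this

theorem cosemi_of (h : ∀ (V : Type u) [AddCommGroup V] [Module k V]
    (ρ : V →ₗ[k] V ⊗[k] C), IsComod k C ρ → IsSemisimpleModule (FA k C) (CMod ρ)) :
    IsCosemisimple k C := by
  intro V _ _ ρ hρ
  have := h V ρ hρ
  obtain ⟨s, hs1, hs2, hs3⟩ :=
    IsSemisimpleModule.exists_sSupIndep_sSup_simples_eq_top (FA k C) (CMod ρ)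
  refine ⟨s, fun i => ofSub ρ i, ?_, ?_, ?_⟩
  · rintro ⟨N, hN⟩
    refine (simple_iff ρ _).2 ⟨ofSub_stable ρ N, ?_⟩
    exact isSimpleModule_iff_isAtom.1 (hs3 N hN)
  · rw [sSupIndep_iff] at hs1
    intro i
    have := hs1 i
    rw [disjoint_iff_inf_le] at this ⊢
    intro x hx
    have hle : (⨆ j, ⨆ (_ : j ≠ i), ofSub ρ j.1) ≤ ofSub ρ (⨆ j, ⨆ (_ : j ≠ i), (j : Submodule (FA k C) (CMod ρ))) := by
      refine iSup_le fun j => iSup_le fun hj y hy => ?_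
      have : (j : Submodule (FA k C) (CMod ρ)) ≤ ⨆ j, ⨆ (_ : j ≠ i), (j : Submodule (FA k C) (CMod ρ)) :=
        le_iSup₂_of_le j hj le_rfl
      exact this hy
    exact this ⟨hx.1, hle hx.2⟩
  · rw [eq_top_iff]
    intro x _
    let N : Submodule (FA k C) (CMod ρ) := toSub ρ (⨆ i : s, ofSub ρ i) (by
      intro f u hu
      have hle : (⨆ i : s, ofSub ρ i) ≤ (⨆ i : s, ofSub ρ i).comap (act ρ f) := by
        refine iSup_le fun j y hy => ?_
        exact le_iSup (fun i : s => ofSub ρ i) j (ofSub_stable ρ j f y hy)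
      exact hle hu)
    have hN : sSup s ≤ N := by
      refine sSup_le fun j hj y hy => ?_
      exact le_iSup (fun i : s => ofSub ρ i) ⟨j, hj⟩ hy
    rw [hs2] at hN
    have hx : ∀ y : CMod ρ, y ∈ N := fun y => hN (Submodule.mem_top)
    exact hx x

end CMod
end QGP

namespace QGP
open QG HopfAlgebra

section MMod
variable {k : Type u} [Field k] {C : Type u} [AddCommGroup C] [Module k C]
  {n : Type u} [Fintype n] [DecidableEq n]

/-- coaction from a matrix -/
noncomputable def mmCo (k : Type u) [Field k] {C : Type u} [AddCommGroup C] [Module k C]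
    {n : Type u} [Fintype n] [DecidableEq n] (c : Matrix n n C) :
    (n → k) →ₗ[k] (n → k) ⊗[k] C :=
  Fintype.linearCombination k (fun j => ∑ i, (Pi.single i (1 : k) : n → k) ⊗ₜ[k] c i j)

theorem mmCo_single (c : Matrix n n C) (j : n) :
    mmCo k c (Pi.single j 1) = ∑ i, (Pi.single i (1 : k) : n → k) ⊗ₜ[k] c i j := by
  simp [mmCo, Fintype.linearCombination_apply_single]

theorem act_mmCo (c : Matrix n n C) (f : Module.Dual k C) (v : n → k) :
    act (mmCo k c) f v = (c.map f).mulVec v := by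
  have : act (mmCo k c) f = (c.map f).mulVecLin := by
    refine LinearMap.pi_ext' fun j => LinearMap.ext_ring ?_
    simp only [LinearMap.comp_apply, LinearMap.single_apply, act_apply, mmCo_single, map_sum, sl_tmul]
    ext i
    simp [Finset.sum_apply, Pi.single_apply]
  rw [this]; rfl

theorem act_basis {V : Type u} [AddCommGroup V] [Module k V] {ρ : V →ₗ[k] V ⊗[k] C}
    (c : Matrix n n C) (e : n → V) (h : ∀ j, ρ (e j) = ∑ i, e i ⊗ₜ[k] c i j)
    (f : Module.Dual k C) (v : n → k) :
    Fintype.linearCombination k e (act (mmCo k c) f v) =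
      act ρ f (Fintype.linearCombination k e v) := by
  have : Fintype.linearCombination k e ∘ₗ (act (mmCo k c) f) =
      act ρ f ∘ₗ (Fintype.linearCombination k e) := by
    refine LinearMap.pi_ext' fun j => LinearMap.ext_ring ?_
    simp [LinearMap.comp_apply, LinearMap.single_apply, act_apply, mmCo_single,
      Fintype.linearCombination_apply_single, h]
  exact LinearMap.congr_fun this v

/-- module hom from a matrix comodule -/
noncomputable def basisHom {V : Type u} [AddCommGroup V] [Module k V] {ρ : V →ₗ[k] V ⊗[k] C}
    (c : Matrix n n C) (e : n → V) (h : ∀ j, ρ (e j) = ∑ i, e i ⊗ₜ[k] c i j) :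
    CMod (mmCo k c) →ₗ[FA k C] CMod ρ :=
  toHom (Fintype.linearCombination k e) (act_basis c e h)

variable [Coalgebra k C]

theorem mmCo_comod {c : Matrix n n C} (hc : IsMM (k := k) c) : IsComod k C (mmCo k c) := by
  constructor
  · intro v
    have : (mmCo k c).rTensor C ∘ₗ (mmCo k c) = (TensorProduct.assoc k (n → k) C C).symm.toLinearMap ∘ₗ
      ((Coalgebra.comul (R := k) (A := C)).lTensor (n → k)) ∘ₗ (mmCo k c) := by
      refine LinearMap.pi_ext' fun j => LinearMap.ext_ring ?_
      simp only [LinearMap.comp_apply, LinearMap.single_apply, mmCo_single, map_sum,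
        LinearMap.rTensor_tmul, LinearMap.lTensor_tmul, hc.comul, TensorProduct.tmul_sum,
        TensorProduct.sum_tmul, LinearEquiv.coe_coe, TensorProduct.assoc_symm_tmul]
      rw [Finset.sum_comm]
    exact LinearMap.congr_fun this v
  · intro v
    have : (TensorProduct.rid k (n → k)).toLinearMap ∘ₗ
      ((Coalgebra.counit (R := k) (A := C)).lTensor (n → k)) ∘ₗ (mmCo k c) = LinearMap.id := by
      refine LinearMap.pi_ext' fun j => LinearMap.ext_ring ?_
      simp [LinearMap.comp_apply, LinearMap.single_apply, mmCo_single, hc.counit]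
    exact LinearMap.congr_fun this v

/-- row homs to the regular comodule. -/
noncomputable def rowHom {c : Matrix n n C} (hc : IsMM (k := k) c) (i : n) :
    CMod (mmCo k c) →ₗ[FA k C] CMod (Coalgebra.comul (R := k) (A := C)) :=
  basisHom c (fun j => c i j) (fun j => hc.comul i j)

theorem rowHom_apply {c : Matrix n n C} (hc : IsMM (k := k) c) (i : n) (v : n → k) :
    rowHom hc i v = Fintype.linearCombination k (fun j => c i j) v := rfl

theorem row_inj {c : Matrix n n C} (hc : IsMM (k := k) c) (w : n → k) (i : n)
    (h : Fintype.linearCombination k (fun j => c i j) w = 0) : w i = 0 := by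
  have h2 := congrArg (Coalgebra.counit (R := k)) h
  simpa [Fintype.linearCombination_apply, hc.counit] using h2

theorem semi_of_reg (h : IsSemisimpleModule (FA k C) (CMod (Coalgebra.comul (R := k) (A := C)))) :
    IsCosemisimple k C := by
  classical
  refine cosemi_of fun V _ _ ρ hρ => ?_
  have key : ∀ v : V, ∃ N : Submodule (FA k C) (CMod ρ), IsSemisimpleModule (FA k C) N ∧
      (v : CMod ρ) ∈ N := by
    intro v
    have := cyc_finite ρ v
    let e := Module.Free.chooseBasis k (cyc ρ v)
    obtain ⟨c, hc, h'⟩ := exists_MM hρ _ (cyc_stable hρ v) e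
    have s1 : IsSemisimpleModule (FA k C) (CMod (mmCo k c)) := by
      refine IsSemisimpleModule.of_injective (LinearMap.pi (fun i => rowHom hc i)) ?_
      rw [← LinearMap.ker_eq_bot, LinearMap.ker_eq_bot']
      intro w hw
      funext i
      have h1 : Fintype.linearCombination k (fun j => c i j) w = 0 := congrFun hw i
      exact row_inj hc w i h1
    refine ⟨LinearMap.range (basisHom c (fun j => (e j : V)) h'), IsSemisimpleModule.range _, ?_⟩
    refine ⟨(e.repr ⟨v, mem_cyc hρ v⟩ : _ → k), ?_⟩
    have := congrArg (Submodule.subtype _) (e.sum_repr ⟨v, mem_cyc hρ v⟩)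
    rw [map_sum] at this
    refine Eq.trans ?_ this
    rfl
  choose N hN hv using key
  refine isSemisimpleModule_of_isSemisimpleModule_submodule' (p := N) hN ?_
  rw [eq_top_iff]
  intro x _
  exact le_iSup N x (hv x)

/-- simple multiplicative matrices -/
def SimpleMM (c : Matrix n n C) : Prop :=
  ∀ U : Submodule k (n → k), (∀ f : Module.Dual k C, ∀ u ∈ U, (c.map f).mulVec u ∈ U) →
    U = ⊥ ∨ U = ⊤

theorem simple_span (h : IsCosemisimple k C) (a : C) :
    a ∈ Submodule.span k {x : C | ∃ (n : Type u) (_ : Fintype n)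
    (_ : DecidableEq n) (c : Matrix n n C) (i j : n), IsMM (k := k) c ∧ SimpleMM (k := k) c ∧
      x = c i j} := by
  classical
  have hρ := reg_comod (k := k) (C := C)
  obtain ⟨ι, U, h1, -, h3⟩ := h C _ hρ
  have ha : a ∈ ⨆ i, U i := by rw [h3]; trivial
  revert a
  change (⨆ i, U i) ≤ _
  refine iSup_le fun i a ha => ?_
  obtain ⟨hs, hne, hsim⟩ := h1 i
  have hst := (isSubcomod_iff _ _).1 hs
  by_cases ha0 : a = 0
  · rw [ha0]; exact Submodule.zero_mem _
  have hcy : cyc (Coalgebra.comul (R := k) (A := C)) a = U i := by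
    have hle : cyc (Coalgebra.comul (R := k) (A := C)) a ≤ U i := by
      rintro _ ⟨f, rfl⟩
      exact hst f a ha
    refine (hsim _ hle ((isSubcomod_iff _ _).2 (cyc_stable hρ a))).resolve_left ?_
    intro h0
    have := mem_cyc hρ a
    rw [h0] at this
    exact ha0 this
  have hfin : Module.Finite k (U i) := hcy ▸ cyc_finite (Coalgebra.comul (R := k) (A := C)) a
  let e := Module.Free.chooseBasis k (U i)
  obtain ⟨c, hc, h⟩ := exists_MM hρ _ hst e
  have hca : a = ∑ j, e.repr ⟨a, ha⟩ j • (e j : C) := by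
    have := congrArg (Submodule.subtype _) (e.sum_repr ⟨a, ha⟩)
    rw [map_sum] at this
    exact this.symm
  rw [hca]
  refine Submodule.sum_mem _ fun j _ => Submodule.smul_mem _ _ ?_
  rw [reg_basis (fun j => (e j : C)) c h j]
  refine Submodule.sum_mem _ fun l _ => Submodule.smul_mem _ _ (Submodule.subset_span ?_)
  refine ⟨_, _, _, c, l, j, hc, ?_, rfl⟩
  intro W hW
  let E := Fintype.linearCombination k (fun j => (e j : C))
  have li : LinearIndependent k (fun j => (e j : C)) :=
    e.linearIndependent.map' (U i).subtype (Submodule.ker_subtype _)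
  have hE : Function.Injective E := by
    rw [← LinearMap.ker_eq_bot, LinearMap.ker_eq_bot']
    intro w hw
    funext j
    exact Fintype.linearIndependent_iff.1 li w hw j
  have hEr : ∀ v, E v ∈ U i := by
    intro v
    simp only [E, Fintype.linearCombination_apply]
    exact Submodule.sum_mem _ fun j _ => Submodule.smul_mem _ _ (e j).2
  have hWs : IsSubcomod k C (Coalgebra.comul (R := k) (A := C)) (W.map E) := by
    rw [isSubcomod_iff]
    rintro f _ ⟨w, hw, rfl⟩
    refine ⟨_, hW f w hw, ?_⟩
    rw [← act_mmCo]
    exact act_basis c _ h f w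
  rcases hsim (W.map E) (by rintro _ ⟨w, hw, rfl⟩; exact hEr w) hWs with h0 | h0
  · left
    rw [eq_bot_iff]
    intro w hw
    have : E w ∈ W.map E := ⟨w, hw, rfl⟩
    rw [h0, Submodule.mem_bot] at this
    exact hE (this.trans (map_zero E).symm)
  · right
    rw [eq_top_iff]
    intro w _
    have : E w ∈ W.map E := by rw [h0]; exact hEr w
    obtain ⟨w', hw', h'⟩ := this
    rwa [← hE h']

end MMod

theorem reduce {k : Type u} [Field k] {G H : Type u} [Ring G] [HopfAlgebra k G] [Ring H]
    [HopfAlgebra k H] (π : G →ₐc[k] H) (hsurj : Function.Surjective π)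
    (hcss : IsCosemisimple k G)
    (hmain : ∀ (n : Type u) [Fintype n] [DecidableEq n] (c : Matrix n n G), IsMM (k := k) c →
      SimpleMM (k := k) c → IsSemisimpleModule (FA k H) (CMod (mmCo k (c.map π)))) :
    IsCosemisimple k H := by
  refine semi_of_reg ?_
  let I := {N : Submodule (FA k H) (CMod (Coalgebra.comul (R := k) (A := H))) //
    IsSemisimpleModule (FA k H) N}
  refine isSemisimpleModule_of_isSemisimpleModule_submodule' (p := fun N : I => N.1)
    (fun N => N.2) ?_
  rw [eq_top_iff]
  intro x _
  obtain ⟨a, rfl⟩ := hsurj x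
  have hle : Submodule.span k {x : G | ∃ (n : Type u) (_ : Fintype n)
    (_ : DecidableEq n) (c : Matrix n n G) (i j : n), IsMM (k := k) c ∧ SimpleMM (k := k) c ∧
      x = c i j} ≤ (ofSub (Coalgebra.comul (R := k) (A := H)) (⨆ N : I, N.1)).comap (π : G →ₗ[k] H) := by
    refine Submodule.span_le.2 ?_
    rintro _ ⟨n, _, _, c, i, j, hc, hs, rfl⟩
    have := hmain n c hc hs
    have hc' := hc.map π
    let N : I := ⟨LinearMap.range (rowHom hc' i), IsSemisimpleModule.range _⟩
    refine le_iSup (fun N : I => N.1) N ?_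
    refine ⟨(Pi.single j 1 : n → k), ?_⟩
    refine (rowHom_apply hc' i _).trans ?_
    rw [Fintype.linearCombination_apply_single, one_smul]
    rfl
  exact hle (simple_span hcss a)
end QGP

namespace QGP
open QG HopfAlgebra

section Slices
variable {k : Type u} [Field k] {D : Type u} [AddCommGroup D] [Module k D]
  {n : Type u} [Fintype n] [DecidableEq n]

/-- `U ⊗ D` inside matrices over `D`. -/
def extD (D : Type u) [AddCommGroup D] [Module k D] (U : Submodule k (Matrix n n k)) :
    Submodule k (Matrix n n D) :=
  Submodule.span k {Y | ∃ t ∈ U, ∃ d : D, Y = t.map (fun a => a • d)}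

theorem mem_extD (U : Submodule k (Matrix n n k)) (X : Matrix n n D)
    (h : ∀ g : Module.Dual k D, X.map g ∈ U) : X ∈ extD D U := by
  classical
  let b := Module.Basis.ofVectorSpace k D
  let S := Finset.univ.biUnion (fun p : n × n => (b.repr (X p.1 p.2)).support)
  have : X = ∑ β ∈ S, (X.map (b.coord β)).map (fun a => a • b β) := by
    ext i j
    rw [Matrix.sum_apply]
    have h1 := b.linearCombination_repr (X i j)
    rw [Finsupp.linearCombination_apply,
      Finsupp.sum_of_support_subset (s := S) _ _ _ (by simp)] at h1
    · exact h1.symm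
    · exact Finset.subset_biUnion_of_mem (fun p : n × n => (b.repr (X p.1 p.2)).support)
        (Finset.mem_univ (i, j))
  rw [this]
  refine Submodule.sum_mem _ fun β _ => Submodule.subset_span ?_
  exact ⟨_, h (b.coord β), b β, rfl⟩

/-- pairing -/
noncomputable def prA (D : Type u) [AddCommGroup D] [Module k D] (ψ : n × n → k) :
    Matrix n n D →ₗ[k] D where
  toFun X := ∑ a, ψ a • X a.1 a.2
  map_add' X Y := by simp [Finset.sum_add_distrib]
  map_smul' r X := by simp [Finset.smul_sum, smul_comm r]

theorem prA_apply (ψ : n × n → k) (X : Matrix n n D) : prA D ψ X = ∑ a, ψ a • X a.1 a.2 := rfl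

theorem prA_map (ψ : n × n → k) (X : Matrix n n D) (g : Module.Dual k D) :
    g (prA D ψ X) = prA k ψ (X.map g) := by
  simp [prA_apply]

theorem prA_tmul (ψ : n × n → k) (t : Matrix n n k) (d : D) :
    prA D ψ (t.map (fun a => a • d)) = prA k ψ t • d := by
  simp [prA_apply, Finset.sum_smul, mul_smul]

end Slices

section TAlg
variable {k : Type u} [Field k] {C : Type u} [AddCommGroup C] [Module k C] [Coalgebra k C]
  {n : Type u} [Fintype n] [DecidableEq n]

theorem conv_map {x : Matrix n n C} (hx : IsMM (k := k) x) (f g : Module.Dual k C) :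
    x.map f * x.map g = x.map (conv f g) := by
  ext i j
  simp [Matrix.mul_apply, conv, hx.comul]

theorem counit_map {x : Matrix n n C} (hx : IsMM (k := k) x) :
    x.map (Coalgebra.counit (R := k) (A := C)) = 1 := by
  ext i j
  simp [hx.counit, Matrix.one_apply]

/-- the algebra of slices -/
def TA {x : Matrix n n C} (hx : IsMM (k := k) x) : Subalgebra k (Matrix n n k) where
  carrier := {M | ∃ f : Module.Dual k C, M = x.map f}
  mul_mem' := by
    rintro _ _ ⟨f, rfl⟩ ⟨g, rfl⟩
    exact ⟨conv f g, conv_map hx f g⟩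
  add_mem' := by
    rintro _ _ ⟨f, rfl⟩ ⟨g, rfl⟩
    exact ⟨f + g, by ext i j; simp⟩
  algebraMap_mem' := by
    intro r
    refine ⟨r • Coalgebra.counit, ?_⟩
    rw [Algebra.algebraMap_eq_smul_one, ← counit_map hx]
    ext i j; simp

theorem mem_TA {x : Matrix n n C} (hx : IsMM (k := k) x) (f : Module.Dual k C) :
    x.map f ∈ TA hx := ⟨f, rfl⟩

end TAlg

section Gen
variable {k : Type u} [Field k] {G H : Type u} [Ring G] [HopfAlgebra k G] [Ring H]
    [HopfAlgebra k H] (π : G →ₐc[k] H) {m : Type u} [Fintype m] [DecidableEq m]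

/-- invariance of a row vector -/
def Inv (q : Matrix m m G) (ψ : m → k) : Prop :=
  ∀ b, ∑ a, ψ a • π (q a b) = ψ b • (1 : H)

theorem lam_map {lam : H →ₗ[k] G ⊗[k] H}
    (hl : lam ∘ₗ (π : G →ₗ[k] H) = ((π : G →ₗ[k] H).lTensor G) ∘ₗ adL k G)
    {q : Matrix m m G} (hq : IsMM (k := k) q) (i j : m) :
    lam (π (q i j)) = ∑ a, ∑ b, (q i a * antipode k (q b j)) ⊗ₜ[k] π (q a b) := by
  have := LinearMap.congr_fun hl (q i j)
  simp only [LinearMap.comp_apply, hq.adL, map_sum, LinearMap.lTensor_tmul] at this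
  exact this

theorem lam_one {lam : H →ₗ[k] G ⊗[k] H}
    (hl : lam ∘ₗ (π : G →ₗ[k] H) = ((π : G →ₗ[k] H).lTensor G) ∘ₗ adL k G) :
    lam 1 = 1 := by
  have h1 : IsMM (k := k) (fun _ _ => 1 : Matrix PUnit PUnit G) := by
    constructor
    · intro i j; simp [Bialgebra.comul_one, Algebra.TensorProduct.one_def]
    · intro i j; simp
  have := lam_map π hl h1 PUnit.unit PUnit.unit
  simpa [Algebra.TensorProduct.one_def] using this

theorem inv_slice {lam : H →ₗ[k] G ⊗[k] H}
    (hl : lam ∘ₗ (π : G →ₗ[k] H) = ((π : G →ₗ[k] H).lTensor G) ∘ₗ adL k G)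
    {q : Matrix m m G} (hq : IsMM (k := k) q) (ψ : m → k) (hψ : Inv π q ψ)
    (g : Module.Dual k G) : Inv π q (fun b => ∑ a, ψ a * g (q a b)) := by
  let l1 : G →ₐ[k] G ⊗[k] H := Algebra.TensorProduct.includeLeft
  let l2 : H →ₐ[k] G ⊗[k] H := Algebra.TensorProduct.includeRight
  let Q1 := q.map l1
  let Q2 := (q.map π).map l2
  let Q1' := (q.map (antipode k)).map l1
  let Ψ : m → G ⊗[k] H := fun a => algebraMap k _ (ψ a)
  have hQ : Q1' * Q1 = 1 := by
    have := congrArg (fun M => M.map l1) hq.S_mul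
    simpa [Matrix.map_mul, Q1, Q1'] using this
  have e1 : Matrix.vecMul Ψ (Q1 * Q2 * Q1') = Ψ := by
    funext b
    have h := congrArg lam (hψ b)
    simp only [map_sum, map_smul, lam_one π hl, lam_map π hl hq] at h
    simp only [Ψ, Matrix.vecMul, dotProduct, Algebra.algebraMap_eq_smul_one, smul_mul_assoc, one_mul]
    rw [← h]
    refine Finset.sum_congr rfl fun a _ => ?_
    congr 1
    simp only [Matrix.mul_apply, Finset.sum_mul, Q1, Q2, Q1', Matrix.map_apply, l1, l2,
      Algebra.TensorProduct.includeLeft_apply, Algebra.TensorProduct.includeRight_apply,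
      Algebra.TensorProduct.tmul_mul_tmul, one_mul, mul_one]
    rw [Finset.sum_comm]
  have e2 : Matrix.vecMul Ψ (Q1 * Q2) = Matrix.vecMul Ψ Q1 := by
    have := congrArg (fun v => Matrix.vecMul v Q1) e1
    simpa only [Matrix.vecMul_vecMul, Matrix.mul_assoc, hQ, Matrix.mul_one] using this
  intro b
  have e3 := congrArg ((TensorProduct.lid k H).toLinearMap ∘ₗ g.rTensor H) (congrFun e2 b)
  simp only [Ψ, Matrix.vecMul, dotProduct, Algebra.algebraMap_eq_smul_one, smul_mul_assoc, one_mul,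
    Matrix.mul_apply, Q1, Q2, Matrix.map_apply, l1, l2,
      Algebra.TensorProduct.includeLeft_apply, Algebra.TensorProduct.includeRight_apply,
      Algebra.TensorProduct.tmul_mul_tmul, mul_one, map_sum, map_smul, LinearMap.comp_apply,
      LinearMap.rTensor_tmul, LinearEquiv.coe_coe, TensorProduct.lid_tmul] at e3
  simp only [Finset.sum_smul, mul_smul]
  rw [← e3, Finset.sum_comm]
  simp only [Finset.smul_sum]

theorem exists_compl (hcss : IsCosemisimple k G) {q : Matrix m m G} (hq : IsMM (k := k) q)
    (U : Submodule k (m → k)) (hU : ∀ f : Module.Dual k G, ∀ u ∈ U, (q.map f).mulVec u ∈ U) :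
    ∃ N : Submodule k (m → k), (∀ f : Module.Dual k G, ∀ u ∈ N, (q.map f).mulVec u ∈ N) ∧
      IsCompl U N := by
  have := cosemi_to (mmCo k q) hcss (mmCo_comod hq)
  have hU' : ∀ f : Module.Dual k G, ∀ u ∈ U, act (mmCo k q) f u ∈ U := by
    intro f u hu; rw [act_mmCo]; exact hU f u hu
  obtain ⟨N, hN⟩ := exists_isCompl (toSub (mmCo k q) U hU')
  refine ⟨ofSub _ N, ?_, ?_, ?_⟩
  · intro f u hu
    rw [← act_mmCo]
    exact ofSub_stable _ N f u hu
  · rw [disjoint_iff_inf_le]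
    have := hN.1
    rw [disjoint_iff_inf_le] at this
    intro x hx
    exact this ⟨hx.1, hx.2⟩
  · rw [codisjoint_iff_le_sup]
    intro x _
    have := hN.2
    rw [codisjoint_iff_le_sup] at this
    have hx : ∀ y : CMod (mmCo k q), y ∈ toSub (mmCo k q) U hU' ⊔ N :=
      fun y => this (Submodule.mem_top)
    obtain ⟨y, hy, z, hz, h⟩ := Submodule.mem_sup.1 (hx x)
    exact Submodule.mem_sup.2 ⟨y, hy, z, hz, h⟩

end Gen
end QGP

namespace QGP
open QG HopfAlgebra

section Core
variable {k : Type u} [Field k] {G H : Type u} [Ring G] [HopfAlgebra k G] [Ring H]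
    [HopfAlgebra k H] {π : G →ₐc[k] H} {n : Type u} [Fintype n] [DecidableEq n]
    {c : Matrix n n G}

/-- standing hypotheses -/
structure Setup (π : G →ₐc[k] H) (c : Matrix n n G) : Prop where
  hinv : ∀ x : G, antipode (R := k) (A := G) (antipode (R := k) (A := G) x) = x
  hnorm : IsLeftNormal k G (π : G →ₗ[k] H)
  hc : IsMM (k := k) c
  hcss : IsCosemisimple k G

theorem Setup.rel1 (h : Setup π c) (i j : n) :
    ∑ l, c l j * antipode k (c i l) = if i = j then 1 else 0 := by
  have := congrArg (antipode k) (congrFun (congrFun h.hc.mul_S i) j)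
  simp only [Matrix.mul_apply, Matrix.map_apply, map_sum, antipode_mul_antidistrib, h.hinv] at this
  rw [this, Matrix.one_apply]
  split_ifs <;> simp

theorem Setup.rel2 (h : Setup π c) (i j : n) :
    ∑ l, antipode k (c l j) * c i l = if i = j then 1 else 0 := by
  have := congrArg (antipode k) (congrFun (congrFun h.hc.S_mul i) j)
  simp only [Matrix.mul_apply, Matrix.map_apply, map_sum, antipode_mul_antidistrib, h.hinv] at this
  rw [this, Matrix.one_apply]
  split_ifs <;> simp

/-- conjugation `c t S(c)` -/
noncomputable def Kc (k : Type u) [Field k] {G : Type u} [Ring G] [HopfAlgebra k G]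
    {n : Type u} [Fintype n] [DecidableEq n] (c : Matrix n n G) (t : Matrix n n k) :
    Matrix n n G :=
  c * t.map (algebraMap k G) * c.map (antipode k)

theorem Kc_apply (t : Matrix n n k) (i j : n) :
    Kc k c t i j = ∑ p : n × n, t p.1 p.2 • adj k c (i, j) p := by
  simp only [Kc, Matrix.mul_apply, Matrix.map_apply, Finset.sum_mul, Fintype.sum_prod_type, adj]
  rw [Finset.sum_comm]
  refine Finset.sum_congr rfl fun a _ => Finset.sum_congr rfl fun b _ => ?_
  rw [Algebra.algebraMap_eq_smul_one, mul_smul_comm, mul_one, smul_mul_assoc]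

theorem Kc_slice (t : Matrix n n k) (g : Module.Dual k G) (p : n × n) :
    (Kc k c t).map g p.1 p.2 = ((adj k c).map g).mulVec (fun p => t p.1 p.2) p := by
  rw [Matrix.map_apply, Kc_apply]
  simp [Matrix.mulVec, dotProduct, mul_comm]

theorem Setup.Kc_mul (h : Setup π c) (s t : Matrix n n k) :
    Kc k c s * Kc k c t = Kc k c (s * t) := by
  have := h.hc.S_mul
  simp only [Kc, Matrix.mul_assoc, Matrix.map_mul]
  rw [← Matrix.mul_assoc (c.map (antipode k)) c, this, Matrix.one_mul]

/-- the algebra `T` -/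
noncomputable abbrev Setup.T (h : Setup π c) : Subalgebra k (Matrix n n k) := TA (h.hc.map π)

theorem Setup.Kc_T (h : Setup π c) (t : Matrix n n k) (ht : t ∈ h.T) (g : Module.Dual k G) :
    (Kc k c t).map g ∈ h.T := by
  obtain ⟨lam, hl⟩ := h.hnorm
  obtain ⟨f, rfl⟩ := ht
  refine ⟨LinearMap.mul' k k ∘ₗ TensorProduct.map g f ∘ₗ lam, ?_⟩
  ext i j
  rw [Matrix.map_apply, Kc_apply, Matrix.map_apply, Matrix.map_apply, LinearMap.comp_apply,
    LinearMap.comp_apply, lam_map π hl h.hc]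
  simp [Fintype.sum_prod_type, adj, mul_comm]

/-- invariants -/
def Setup.I (_h : Setup π c) (ψ : n × n → k) : Prop := Inv π (adj k c) ψ

theorem Setup.I_slice (h : Setup π c) {ψ : n × n → k} (hψ : h.I ψ) (g : Module.Dual k G) :
    h.I (fun b => ∑ a, ψ a * g (adj k c a b)) := by
  obtain ⟨lam, hl⟩ := h.hnorm
  exact inv_slice π hl h.hc.adj ψ hψ g

theorem prA_Kc (ψ : n × n → k) (t : Matrix n n k) (g : Module.Dual k G) :
    prA k ψ ((Kc k c t).map g) = prA k (fun b => ∑ a, ψ a * g (adj k c a b)) t := by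
  rw [prA_apply, prA_apply]
  simp only [Kc_slice]
  simp only [smul_eq_mul, Matrix.mulVec, dotProduct, Matrix.map_apply,
    Finset.mul_sum, Finset.sum_mul]
  rw [Finset.sum_comm]
  simp only [mul_assoc]

theorem Setup.comm (h : Setup π c) {ψ : n × n → k} (hψ : h.I ψ) (M : Matrix n n k)
    (hM : M ∈ h.T) : Commute (Matrix.of fun i j => ψ (j, i)) M := by
  obtain ⟨f, rfl⟩ := hM
  have key : ∀ p i, ∑ a, ψ (a, p) • π (c a i) = ∑ j, ψ (i, j) • π (c p j) := by
    intro p i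
    have h1 : ∀ j, ψ (i, j) • π (c p j) =
        ∑ a, ∑ l, ψ (a, l) • (π (c a i) * (π (antipode k (c j l) * c p j))) := by
      intro j
      have := congrArg (fun z => z * π (c p j)) (hψ (i, j))
      simp only [smul_mul_assoc, one_mul, Finset.sum_mul, adj, Fintype.sum_prod_type] at this
      rw [← this]
      simp only [map_mul, mul_assoc]
    simp only [h1]
    rw [Finset.sum_comm]
    refine Finset.sum_congr rfl fun a _ => ?_
    rw [Finset.sum_comm]
    simp only [← Finset.smul_sum, ← Finset.mul_sum, ← map_sum, h.rel2]
    simp [apply_ite π]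
  ext p i
  have := congrArg f (key p i)
  simp only [map_sum, map_smul, smul_eq_mul] at this
  simp only [Matrix.mul_apply, Matrix.map_apply, Matrix.of_apply]
  rw [this]
  simp only [mul_comm]

theorem prA_trace (ψ : n × n → k) (t : Matrix n n k) :
    prA k ψ t = Matrix.trace ((Matrix.of fun i j => ψ (j, i)) * t) := by
  simp only [prA_apply, Matrix.trace, Matrix.diag, Matrix.mul_apply, Fintype.sum_prod_type,
    smul_eq_mul, Matrix.of_apply]
  rw [Finset.sum_comm]

theorem Setup.I_nil (h : Setup π c) {ψ : n × n → k} (hψ : h.I ψ) (M : Matrix n n k)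
    (hM : M ∈ h.T) (hn : IsNilpotent M) : prA k ψ M = 0 := by
  rw [prA_trace]
  have := (h.comm hψ M hM).isNilpotent_mul_left hn
  exact (Matrix.isNilpotent_trace_of_isNilpotent this).eq_zero

/-- the radical -/
def Setup.R (h : Setup π c) : Submodule k (Matrix n n k) where
  carrier := {t | t ∈ h.T ∧ ∀ ψ, h.I ψ → ∀ s ∈ h.T, prA k ψ (t * s) = 0}
  add_mem' := by
    rintro a b ⟨ha, ha'⟩ ⟨hb, hb'⟩
    refine ⟨h.T.add_mem ha hb, fun ψ hψ s hs => ?_⟩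
    rw [add_mul, map_add, ha' ψ hψ s hs, hb' ψ hψ s hs, add_zero]
  zero_mem' := ⟨h.T.zero_mem, fun ψ _ s _ => by simp⟩
  smul_mem' := by
    rintro r a ⟨ha, ha'⟩
    refine ⟨h.T.smul_mem ha r, fun ψ hψ s hs => ?_⟩
    rw [smul_mul_assoc, map_smul, ha' ψ hψ s hs, smul_zero]

theorem Setup.R_prA (h : Setup π c) {ψ : n × n → k} (hψ : h.I ψ) {r : Matrix n n k}
    (hr : r ∈ h.R) : prA G ψ (Kc k c r) = 0 := by
  rw [← Module.forall_dual_apply_eq_zero_iff k]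
  intro g
  rw [prA_map, prA_Kc]
  have := hr.2 _ (h.I_slice hψ g) 1 h.T.one_mem
  rwa [mul_one] at this

/-- `Θ(X)_{kl} = ∑ c_{kp} S(c_{ql}) S(X_{pq})` -/
noncomputable def Th (k : Type u) [Field k] {G : Type u} [Ring G] [HopfAlgebra k G]
    {n : Type u} [Fintype n] (c : Matrix n n G) :
    Matrix n n G →ₗ[k] Matrix n n G where
  toFun X := Matrix.of fun a b => ∑ p : n × n, adj k c (a, b) p * antipode k (X p.1 p.2)
  map_add' X Y := by ext a b; simp [mul_add, Finset.sum_add_distrib]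
  map_smul' r X := by ext a b; simp [Finset.smul_sum]

theorem Setup.Th_Kc (h : Setup π c) (s : Matrix n n k) :
    Th k c (Kc k c s) = s.map (algebraMap k G) := by
  ext a b
  have e1 : ∀ p q : n, antipode k (Kc k c s p q) =
      ∑ i, ∑ j, s i j • (c j q * antipode k (c p i)) := by
    intro p q
    rw [Kc_apply, map_sum, Fintype.sum_prod_type]
    simp [adj, antipode_mul_antidistrib, h.hinv]
  have e2 : ∀ p, ∑ q, c a p * antipode k (c q b) * antipode k (Kc k c s p q) =
      ∑ i, s i b • (c a p * antipode k (c p i)) := by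
    intro p
    calc _ = ∑ i, ∑ j, s i j • (c a p * ((∑ q, antipode k (c q b) * c j q) * antipode k (c p i))) := by
          simp only [e1, Finset.mul_sum, Finset.sum_mul, Finset.smul_sum]
          rw [Finset.sum_comm]
          refine Finset.sum_congr rfl fun i _ => ?_
          rw [Finset.sum_comm]
          refine Finset.sum_congr rfl fun j _ => Finset.sum_congr rfl fun q _ => ?_
          rw [mul_smul_comm]; simp only [mul_assoc]
      _ = _ := by
          simp only [h.rel2]
          refine Finset.sum_congr rfl fun i _ => ?_
          simp
  change ∑ p : n × n, adj k c (a, b) p * antipode k (Kc k c s p.1 p.2) = _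
  rw [Fintype.sum_prod_type]
  simp only [adj]
  simp only [e2]
  rw [Finset.sum_comm]
  have e3 : ∀ i, ∑ p, c a p * antipode k (c p i) = if a = i then 1 else 0 := by
    intro i
    have := congrFun (congrFun h.hc.mul_S a) i
    rw [Matrix.mul_apply, Matrix.one_apply] at this
    simpa using this
  simp only [← Finset.smul_sum, e3]
  simp [Algebra.algebraMap_eq_smul_one]

theorem Th_tmul (y : Matrix n n k) (d : G) :
    Th k c (y.map (fun a => a • d)) = (Kc k c y).map (fun z => z * antipode k d) := by
  ext a b
  change ∑ p : n × n, adj k c (a, b) p * antipode k (y p.1 p.2 • d) = _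
  rw [Matrix.map_apply, Kc_apply, Finset.sum_mul]
  simp

theorem Setup.R_mul (h : Setup π c) {r s : Matrix n n k} (hr : r ∈ h.R) (hs : s ∈ h.T) :
    r * s ∈ h.R := by
  refine ⟨h.T.mul_mem hr.1 hs, fun ψ hψ s' hs' => ?_⟩
  rw [mul_assoc]
  exact hr.2 ψ hψ _ (h.T.mul_mem hs hs')

theorem Setup.R_stable (h : Setup π c) {t : Matrix n n k} (ht : t ∈ h.R) (g : Module.Dual k G) :
    (Kc k c t).map g ∈ h.R := by
  refine ⟨h.Kc_T t ht.1 g, fun ψ hψ s hs => ?_⟩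
  have e1 : (Kc k c t).map g * s = (Kc k c t * s.map (algebraMap k G)).map g := by
    ext i j
    simp only [Matrix.mul_apply, Matrix.map_apply, map_sum]
    refine Finset.sum_congr rfl fun l _ => ?_
    rw [Algebra.algebraMap_eq_smul_one, mul_smul_comm, mul_one, map_smul, smul_eq_mul, mul_comm]
  have key : ∀ X ∈ extD G (Subalgebra.toSubmodule h.T), prA G ψ (Kc k c t * Th k c X) = 0 := by
    intro X hX
    induction hX using Submodule.span_induction with
    | mem X hX =>
      obtain ⟨y, hy, d, rfl⟩ := hX
      rw [Th_tmul]
      have : Kc k c t * (Kc k c y).map (fun z => z * antipode k d) =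
          (Kc k c (t * y)).map (fun z => z * antipode k d) := by
        rw [← h.Kc_mul]
        ext i j
        simp [Matrix.mul_apply, Finset.sum_mul, mul_assoc]
      rw [this]
      have h0 := h.R_prA hψ (h.R_mul ht hy)
      rw [prA_apply] at h0 ⊢
      simp only [Matrix.map_apply, ← smul_mul_assoc]
      rw [← Finset.sum_mul, h0, zero_mul]
    | zero => simp
    | add X Y _ _ hX hY => rw [map_add, mul_add, map_add, hX, hY, add_zero]
    | smul r X _ hX => rw [map_smul, mul_smul_comm, map_smul, hX, smul_zero]
  rw [e1, ← prA_map, ← h.Th_Kc, key _ (mem_extD _ _ fun g => h.Kc_T s hs g), map_zero]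

end Core
end QGP

namespace QGP
open QG HopfAlgebra

section Tr
variable {k : Type u} [Field k] {n : Type u} [Fintype n] [DecidableEq n]

theorem exists_prA (φ : Matrix n n k →ₗ[k] k) : ∃ ψ : n × n → k, ∀ t, prA k ψ t = φ t := by
  refine ⟨fun p => φ (Matrix.single p.1 p.2 1), fun t => ?_⟩
  conv_rhs => rw [Matrix.matrix_eq_sum_single t]
  rw [prA_apply, Fintype.sum_prod_type]
  simp only [map_sum]
  refine Finset.sum_congr rfl fun i _ => Finset.sum_congr rfl fun j _ => ?_
  have : Matrix.single i j (t i j) = t i j • Matrix.single i j (1 : k) := by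
    rw [Matrix.smul_single, smul_eq_mul, mul_one]
  rw [this, map_smul, smul_eq_mul, smul_eq_mul, mul_comm]

/-- opposite product of matrices -/
noncomputable def Zp {H : Type u} [Ring H] (X Y : Matrix n n H) : Matrix n n H :=
  Matrix.of fun i j => ∑ l, X l j * Y i l

theorem trace_conj {H : Type u} [Ring H] [Algebra k H] (T : Subalgebra k (Matrix n n k))
    (ψ : n × n → k)
    (hψ : ∀ a ∈ T, ∀ b ∈ T, prA k ψ (a * b) = prA k ψ (b * a)) (t : Matrix n n k) (ht : t ∈ T)
    (X Y : Matrix n n H) (hX : X ∈ extD H (Subalgebra.toSubmodule T))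
    (hY : Y ∈ extD H (Subalgebra.toSubmodule T)) :
    prA H ψ (X * t.map (algebraMap k H) * Y) = prA H ψ (t.map (algebraMap k H) * Zp X Y) := by
  induction hX using Submodule.span_induction with
  | mem X hX =>
    obtain ⟨a, ha, d, rfl⟩ := hX
    induction hY using Submodule.span_induction with
    | mem Y hY =>
      obtain ⟨a', ha', d', rfl⟩ := hY
      have e1 : a.map (fun z => z • d) * t.map (algebraMap k H) * a'.map (fun z => z • d') =
          (a * (t * a')).map (fun z => z • (d * d')) := by
        rw [← Matrix.mul_assoc]
        ext i j
        simp only [Matrix.mul_apply, Matrix.map_apply, Finset.sum_mul, Finset.sum_smul]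
        refine Finset.sum_congr rfl fun l _ => Finset.sum_congr rfl fun m _ => ?_
        simp only [Algebra.algebraMap_eq_smul_one, smul_mul_assoc, mul_smul_comm, smul_smul, mul_one]
        congr 1; ring
      have e2 : t.map (algebraMap k H) * Zp (a.map (fun z => z • d)) (a'.map (fun z => z • d')) =
          ((t * a') * a).map (fun z => z • (d * d')) := by
        rw [Matrix.mul_assoc]
        ext i j
        simp only [Matrix.mul_apply, Matrix.map_apply, Finset.mul_sum, Finset.sum_smul, Zp,
          Matrix.of_apply]
        refine Finset.sum_congr rfl fun l _ => Finset.sum_congr rfl fun m _ => ?_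
        simp only [Algebra.algebraMap_eq_smul_one, smul_mul_assoc, mul_smul_comm, smul_smul, one_mul]
        congr 1; ring
      rw [e1, e2, prA_tmul, prA_tmul, hψ a ha _ (T.mul_mem ht ha')]
    | zero =>
      have : Zp (a.map (fun z => z • d)) (0 : Matrix n n H) = 0 := by ext i j; simp [Zp]
      simp [this]
    | add Y Y' _ _ hY hY' =>
      have : Zp (a.map (fun z => z • d)) (Y + Y') =
        Zp (a.map (fun z => z • d)) Y + Zp (a.map (fun z => z • d)) Y' := by
        ext i j; simp [Zp, mul_add, Finset.sum_add_distrib]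
      rw [this, mul_add, mul_add, map_add, map_add, hY, hY']
    | smul r Y _ hY =>
      have : Zp (a.map (fun z => z • d)) (r • Y) = r • Zp (a.map (fun z => z • d)) Y := by
        ext i j; simp only [Zp, Matrix.of_apply, Matrix.smul_apply, Finset.smul_sum, mul_smul_comm]
      rw [this, mul_smul_comm, mul_smul_comm, map_smul, map_smul, hY]
  | zero =>
    have : Zp (0 : Matrix n n H) Y = 0 := by ext i j; simp [Zp]
    simp [this]
  | add X X' _ _ hX hX' =>
    have : Zp (X + X') Y = Zp X Y + Zp X' Y := by
      ext i j; simp [Zp, add_mul, Finset.sum_add_distrib]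
    rw [this, add_mul, add_mul, mul_add, map_add, map_add, hX, hX']
  | smul r X _ hX =>
    have : Zp (r • X) Y = r • Zp X Y := by
      ext i j; simp only [Zp, Matrix.of_apply, Matrix.smul_apply, Finset.smul_sum, smul_mul_assoc]
    rw [this, smul_mul_assoc, smul_mul_assoc, mul_smul_comm, map_smul, map_smul, hX]

end Tr

section Core2
variable {k : Type u} [Field k] {G H : Type u} [Ring G] [HopfAlgebra k G] [Ring H]
    [HopfAlgebra k H] {π : G →ₐc[k] H} {n : Type u} [Fintype n] [DecidableEq n]
    {c : Matrix n n G}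

theorem Setup.trace_inv (h : Setup π c) (ψ : n × n → k)
    (hψ : ∀ a ∈ h.T, ∀ b ∈ h.T, prA k ψ (a * b) = prA k ψ (b * a)) (t : Matrix n n k)
    (ht : t ∈ h.T) (f : Module.Dual k H) :
    prA k ψ ((Kc k c t).map (f ∘ₗ (π : G →ₗ[k] H))) = f 1 * prA k ψ t := by
  have hX : c.map π ∈ extD H (Subalgebra.toSubmodule h.T) :=
    mem_extD _ _ fun g => mem_TA (h.hc.map π) g
  have hY : (c.map (antipode k)).map π ∈ extD H (Subalgebra.toSubmodule h.T) := by
    refine mem_extD _ _ fun g => ⟨g ∘ₗ antipode k, ?_⟩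
    ext i j
    simp only [Matrix.map_apply, LinearMap.comp_apply, h.hc.map_S]
  have e := trace_conj (H := H) h.T ψ hψ t ht _ _ hX hY
  have eZ : Zp (c.map π) ((c.map (antipode k)).map π) = 1 := by
    ext i j
    have := congrArg π (h.rel1 i j)
    simp only [map_sum, map_mul] at this
    simp only [Zp, Matrix.of_apply, Matrix.map_apply, this, Matrix.one_apply]
    split_ifs <;> simp
  rw [eZ, mul_one] at e
  have e1 : c.map π * t.map (algebraMap k H) * (c.map (antipode k)).map π = (Kc k c t).map π := by
    have hm : t.map (algebraMap k H) = (t.map (algebraMap k G)).map π := by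
      ext i j; simp only [Matrix.map_apply]; exact ((π : G →ₐ[k] H).commutes (t i j)).symm
    rw [hm, Kc]
    have := Matrix.map_mul (L := c * t.map (algebraMap k G)) (M := c.map (antipode k))
      (f := ((π : G →ₐ[k] H) : G →+* H))
    have h2 := Matrix.map_mul (L := c) (M := t.map (algebraMap k G))
      (f := ((π : G →ₐ[k] H) : G →+* H))
    rw [h2] at this
    exact this.symm
  rw [e1] at e
  have e2 := congrArg f e
  rw [prA_map, prA_map] at e2
  refine e2.trans ?_
  have : (t.map (algebraMap k H)).map f = f 1 • t := by
    ext i j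
    simp [Algebra.algebraMap_eq_smul_one, mul_comm]
  rw [this, map_smul, smul_eq_mul]

/-- vectorization -/
def ve (k : Type u) [Field k] (n : Type u) : Matrix n n k ≃ₗ[k] (n × n → k) where
  toFun t p := t p.1 p.2
  invFun v := Matrix.of fun i j => v (i, j)
  map_add' _ _ := rfl
  map_smul' _ _ := rfl
  left_inv _ := rfl
  right_inv _ := rfl

theorem ve_Kc (t : Matrix n n k) (g : Module.Dual k G) :
    ve k n ((Kc k c t).map g) = ((adj k c).map g).mulVec (ve k n t) := by
  funext p
  exact Kc_slice t g p

theorem Setup.extend (h : Setup π c) (φ : h.T →ₗ[k] k) (hφ : ∀ a b, φ (a * b) = φ (b * a)) :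
    ∃ ψ, h.I ψ ∧ ∀ t : h.T, prA k ψ (t : Matrix n n k) = φ t := by
  let U : Submodule k (n × n → k) := (Subalgebra.toSubmodule h.T).map (ve k n).toLinearMap
  obtain ⟨N, hN, hc⟩ := exists_compl h.hcss h.hc.adj U (by
    rintro f _ ⟨t, ht, rfl⟩
    exact ⟨_, h.Kc_T t ht f, ve_Kc t f⟩)
  obtain ⟨φ', hφ'⟩ := LinearMap.exists_extend (p := Subalgebra.toSubmodule h.T) φ
  have hφ1 : ∀ t (ht : t ∈ h.T), φ' t = φ ⟨t, ht⟩ := fun t ht => LinearMap.congr_fun hφ' ⟨t, ht⟩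
  let P := U.projectionOnto N hc
  let Φ : Matrix n n k →ₗ[k] k :=
    φ' ∘ₗ (ve k n).symm.toLinearMap ∘ₗ U.subtype ∘ₗ P ∘ₗ (ve k n).toLinearMap
  have hΦT : ∀ t (ht : t ∈ h.T), Φ t = φ ⟨t, ht⟩ := by
    intro t ht
    have : P (ve k n t) = ⟨ve k n t, ⟨t, ht, rfl⟩⟩ :=
      Submodule.projectionOnto_apply_left hc ⟨ve k n t, ⟨t, ht, rfl⟩⟩
    simp only [Φ, LinearMap.comp_apply, LinearEquiv.coe_coe, this, Submodule.subtype_apply,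
      LinearEquiv.symm_apply_apply]
    exact hφ1 t ht
  have hΦN : ∀ t, ve k n t ∈ N → Φ t = 0 := by
    intro t ht
    have : P (ve k n t) = 0 := (Submodule.projectionOnto_apply_eq_zero_iff hc).2 ht
    simp only [Φ, LinearMap.comp_apply, LinearEquiv.coe_coe, this, map_zero]
  obtain ⟨ψ, hψ⟩ := exists_prA Φ
  refine ⟨ψ, ?_, fun t => by rw [hψ, hΦT t t.2]⟩
  have tr : ∀ a ∈ h.T, ∀ b ∈ h.T, prA k ψ (a * b) = prA k ψ (b * a) := by
    intro a ha b hb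
    rw [hψ, hψ, hΦT _ (h.T.mul_mem ha hb), hΦT _ (h.T.mul_mem hb ha)]
    exact hφ ⟨a, ha⟩ ⟨b, hb⟩
  have key : ∀ (f : Module.Dual k H) (t : Matrix n n k),
      prA k ψ ((Kc k c t).map (f ∘ₗ (π : G →ₗ[k] H))) = f 1 * prA k ψ t := by
    intro f t
    have ht : ve k n t ∈ U ⊔ N := by rw [hc.sup_eq_top]; trivial
    obtain ⟨_, ⟨t1, ht1, rfl⟩, v2, hv2, h12⟩ := Submodule.mem_sup.1 ht
    obtain ⟨t2, rfl⟩ := (ve k n).surjective v2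
    have : t = t1 + t2 := by
      apply (ve k n).injective
      rw [map_add]; exact h12.symm
    subst this
    have e1 := h.trace_inv ψ tr t1 ht1 f
    have e2 : (Kc k c (t1 + t2)).map (f ∘ₗ (π : G →ₗ[k] H)) =
        (Kc k c t1).map (f ∘ₗ (π : G →ₗ[k] H)) + (Kc k c t2).map (f ∘ₗ (π : G →ₗ[k] H)) := by
      apply (ve k n).injective
      rw [map_add, ve_Kc, ve_Kc, ve_Kc, map_add, Matrix.mulVec_add]
    rw [e2, map_add, map_add, mul_add, e1]
    congr 1
    rw [hψ, hψ, hΦN t2 hv2, mul_zero, hΦN]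
    rw [ve_Kc]
    exact hN _ _ hv2
  intro b
  rw [← sub_eq_zero, ← Module.forall_dual_apply_eq_zero_iff k]
  intro f
  rw [map_sub, sub_eq_zero]
  have := key f (Matrix.single b.1 b.2 1)
  rw [prA_Kc] at this
  have hs : ∀ ψ' : n × n → k, prA k ψ' (Matrix.single b.1 b.2 1) = ψ' b := by
    intro ψ'
    rw [prA_apply, Finset.sum_eq_single b]
    · simp
    · rintro ⟨i, j⟩ _ hb
      have : ¬ (b.1 = i ∧ b.2 = j) := by
        rintro ⟨rfl, rfl⟩; exact hb rfl
      simp [Matrix.single_apply, this]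
    · simp
  rw [hs, hs] at this
  simp only [map_sum, map_smul, smul_eq_mul]
  rw [mul_comm (ψ b)]
  exact this

theorem trace_nondeg {d : ℕ} (M : Matrix (Fin d) (Fin d) k)
    (h : ∀ N : Matrix (Fin d) (Fin d) k, Matrix.trace (M * N) = 0) : M = 0 := by
  ext i j
  have := h (Matrix.single j i 1)
  rw [Matrix.trace_mul_single] at this
  simpa using this

theorem exists_trace [IsAlgClosed k] {T : Type u} [Ring T] [Algebra k T] [Module.Finite k T]
    (t : T) (h : ∀ φ : T →ₗ[k] k, (∀ a b, φ (a * b) = φ (b * a)) → ∀ s, φ (t * s) = 0) :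
    t ∈ Ring.jacobson T := by
  have : IsArtinianRing T := IsArtinianRing.of_finite k T
  obtain ⟨m, d, -, ⟨e⟩⟩ := IsSemisimpleRing.exists_algEquiv_pi_matrix_of_isAlgClosed k
    (T ⧸ Ring.jacobson T)
  let mk : T →ₐ[k] T ⧸ Ring.jacobson T := Ideal.Quotient.mkₐ k (Ring.jacobson T)
  have hmk : Function.Surjective mk := Ideal.Quotient.mkₐ_surjective k _
  have key : e (mk t) = 0 := by
    funext i
    refine trace_nondeg _ fun N => ?_
    let φ : T →ₗ[k] k := Matrix.traceLinearMap (Fin (d i)) k k ∘ₗ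
      LinearMap.proj (R := k) (φ := fun i => Matrix (Fin (d i)) (Fin (d i)) k) i ∘ₗ
      (e.toAlgHom.toLinearMap) ∘ₗ mk.toLinearMap
    have hφ : ∀ a, φ a = Matrix.trace (e (mk a) i) := fun a => rfl
    obtain ⟨s, hs⟩ := hmk (e.symm (Pi.single i N))
    have := h φ (fun a b => by
      rw [hφ, hφ, map_mul, map_mul, map_mul, map_mul, Pi.mul_apply, Pi.mul_apply,
        Matrix.trace_mul_comm]) s
    rw [hφ, map_mul, map_mul, Pi.mul_apply, hs, e.apply_symm_apply, Pi.single_eq_same] at this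
    exact this
  have : mk t = 0 := by
    apply e.injective; rw [key, map_zero]
  exact Ideal.Quotient.eq_zero_iff_mem.1 this

end Core2
end QGP

namespace QGP
open QG HopfAlgebra

section Transfer
variable {k : Type u} [Field k] {C : Type u} [AddCommGroup C] [Module k C] [Coalgebra k C]
  {n : Type u} [Fintype n] [DecidableEq n]

/-- vectors as a module over a matrix subalgebra -/
def TV (_T : Subalgebra k (Matrix n n k)) : Type u := n → k

variable (T : Subalgebra k (Matrix n n k))

instance : AddCommGroup (TV T) := inferInstanceAs (AddCommGroup (n → k))
instance : Module k (TV T) := inferInstanceAs (Module k (n → k))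
instance : Module.Finite k (TV T) := inferInstanceAs (Module.Finite k (n → k))

instance : Module T (TV T) where
  smul t v := (t : Matrix n n k).mulVec v
  one_smul v := Matrix.one_mulVec (v : n → k)
  mul_smul a b v := (Matrix.mulVec_mulVec (v : n → k) (a : Matrix n n k) (b : Matrix n n k)).symm
  smul_zero a := Matrix.mulVec_zero (a : Matrix n n k)
  smul_add a v w := Matrix.mulVec_add (a : Matrix n n k) (v : n → k) w
  add_smul a b v := Matrix.add_mulVec (a : Matrix n n k) b (v : n → k)
  zero_smul v := Matrix.zero_mulVec (v : n → k)

theorem TV_smul (t : T) (v : TV T) : t • v = (t : Matrix n n k).mulVec (v : n → k) := rfl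

instance : IsScalarTower k T (TV T) := IsScalarTower.of_algebraMap_smul (by
  intro r v
  have key : ∀ w : n → k, ((algebraMap k (Matrix n n k) r).mulVec w) = r • w := by
    intro w
    rw [Algebra.algebraMap_eq_smul_one, Matrix.smul_mulVec, Matrix.one_mulVec]
  exact key v)

instance : Module.Finite T (TV T) := Module.Finite.of_restrictScalars_finite k T (TV T)

theorem semi_transfer {x : Matrix n n C} (hx : IsMM (k := k) x)
    (hss : IsSemisimpleModule (TA hx) (TV (TA hx))) :
    IsSemisimpleModule (FA k C) (CMod (mmCo k x)) := by
  let ToT : Submodule (FA k C) (CMod (mmCo k x)) → Submodule (TA hx) (TV (TA hx)) := fun N =>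
    { carrier := (ofSub _ N : Set (n → k))
      add_mem' := fun ha hb => (ofSub _ N).add_mem ha hb
      zero_mem' := (ofSub _ N).zero_mem
      smul_mem' := by
        rintro ⟨_, f, rfl⟩ v hv
        have h2 : ∀ w : n → k, w ∈ ofSub _ N → (x.map f).mulVec w ∈ ofSub _ N := by
          intro w hw
          have := ofSub_stable _ N f w hw
          rwa [act_mmCo] at this
        exact h2 v hv }
  rw [isSemisimpleModule_iff]
  refine ⟨fun N => ?_⟩
  obtain ⟨M, hM⟩ := exists_isCompl (ToT N)
  let U : Submodule k (n → k) := (M.restrictScalars k : Submodule k (TV (TA hx)))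
  have hU : ∀ f : Module.Dual k C, ∀ u ∈ U, act (mmCo k x) f u ∈ U := by
    intro f u hu
    rw [act_mmCo]
    exact M.smul_mem (⟨x.map f, mem_TA hx f⟩ : TA hx) hu
  refine ⟨toSub _ U hU, ?_, ?_⟩
  · rw [disjoint_iff_inf_le]
    have := hM.1
    rw [disjoint_iff_inf_le] at this
    intro y hy
    exact this (x := y) ⟨hy.1, hy.2⟩
  · rw [codisjoint_iff_le_sup]
    intro y _
    have := hM.2
    rw [codisjoint_iff_le_sup] at this
    obtain ⟨a, ha, b, hb, h⟩ := Submodule.mem_sup.1 (this (x := (y : n → k)) Submodule.mem_top)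
    exact Submodule.mem_sup.2 ⟨a, ha, b, hb, h⟩

theorem nak (R : Submodule k (Matrix n n k))
    (hR : ∀ t ∈ R, ∃ h : t ∈ T, (⟨t, h⟩ : T) ∈ Ring.jacobson T)
    (h0 : Submodule.span k {w | ∃ t ∈ R, ∃ v : n → k, w = t.mulVec v} = ⊤) (v : n → k) :
    v = 0 := by
  let W : Submodule T (TV T) := Ring.jacobson T • (⊤ : Submodule T (TV T))
  let W' : Submodule k (n → k) := (W.restrictScalars k : Submodule k (TV T))
  have hW : ∀ w : TV T, w ∈ W' → w ∈ W := fun _ h => h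
  have hW2 : ∀ (t : T) (w : TV T), t ∈ Ring.jacobson T → t • w ∈ W :=
    fun t w h => Submodule.smul_mem_smul h Submodule.mem_top
  have hW3 : ∀ (t : T) (w : n → k), t ∈ Ring.jacobson T → (t : Matrix n n k).mulVec w ∈ W' :=
    fun t w h => hW2 t w h
  have hle2 : Submodule.span k {w | ∃ t ∈ R, ∃ v : n → k, w = t.mulVec v} ≤ W' := by
    refine Submodule.span_le.2 ?_
    rintro _ ⟨r, hr, w, rfl⟩
    obtain ⟨h1, h2⟩ := hR r hr
    exact hW3 ⟨r, h1⟩ w h2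
  rw [h0] at hle2
  have hle : (⊤ : Submodule T (TV T)) ≤ Ring.jacobson T • ⊤ :=
    fun v _ => hW v (hle2 Submodule.mem_top)
  have hb := Submodule.FG.eq_bot_of_le_jacobson_smul Module.Finite.fg_top hle
  have h1 : ∀ v : TV T, v = 0 := by
    intro v
    have h1 : v ∈ (⊤ : Submodule T (TV T)) := Submodule.mem_top
    rwa [hb, Submodule.mem_bot] at h1
  exact h1 v

end Transfer

section Fin
variable {k : Type u} [Field k] {G H : Type u} [Ring G] [HopfAlgebra k G] [Ring H]
    [HopfAlgebra k H] {π : G →ₐc[k] H} {n : Type u} [Fintype n] [DecidableEq n]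
    {c : Matrix n n G}

theorem R_sub_J [IsAlgClosed k] (h : Setup π c) (t : h.T) (ht : (t : Matrix n n k) ∈ h.R) :
    t ∈ Ring.jacobson h.T := by
  refine exists_trace (k := k) t fun φ hφ s => ?_
  obtain ⟨ψ, hψ, hψ'⟩ := h.extend φ hφ
  rw [← hψ']
  exact ht.2 ψ hψ s s.2

theorem J_sub_R (h : Setup π c) (t : h.T) (ht : t ∈ Ring.jacobson h.T) :
    (t : Matrix n n k) ∈ h.R := by
  have : IsArtinianRing h.T := IsArtinianRing.of_finite k h.T
  refine ⟨t.2, fun ψ hψ s hs => h.I_nil hψ _ (h.T.mul_mem t.2 hs) ?_⟩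
  have h1 : t * ⟨s, hs⟩ ∈ Ring.jacobson h.T := Ideal.mul_mem_right _ _ ht
  obtain ⟨m, hm⟩ := IsSemiprimaryRing.isNilpotent (R := h.T)
  have h2 := Ideal.pow_mem_pow h1 m
  rw [hm] at h2
  refine ⟨m, ?_⟩
  have h3 : (t * ⟨s, hs⟩ : h.T) ^ m = 0 := h2
  exact congrArg Subtype.val h3

/-- the subspace `R V` -/
def RV (h : Setup π c) : Submodule k (n → k) :=
  Submodule.span k {w | ∃ t ∈ h.R, ∃ v : n → k, w = t.mulVec v}

theorem RV_stable (h : Setup π c) (g : Module.Dual k G) (u : n → k) (hu : u ∈ RV h) :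
    (c.map g).mulVec u ∈ RV h := by
  have key : ∀ t ∈ h.R, ∀ v : n → k, (c.map g).mulVec (t.mulVec v) ∈ RV h := by
    intro t ht v
    have e1 : Kc k c t * c = c * t.map (algebraMap k G) := by
      rw [Kc, Matrix.mul_assoc, h.hc.S_mul, Matrix.mul_one]
    have e2 : (c.map g).mulVec (t.mulVec v) = ((Kc k c t * c).map g).mulVec v := by
      rw [e1, Matrix.mulVec_mulVec]
      congr 1
      ext i j
      simp [Matrix.mul_apply, Algebra.algebraMap_eq_smul_one, mul_comm]
    rw [e2]
    have hX : Kc k c t ∈ extD G h.R := mem_extD _ _ fun g => h.R_stable ht g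
    generalize Kc k c t = X at hX
    induction hX using Submodule.span_induction with
    | mem X hX =>
      obtain ⟨r, hr, d, rfl⟩ := hX
      refine Submodule.subset_span ⟨r, hr, (c.map (g ∘ₗ LinearMap.mulLeft k d)).mulVec v, ?_⟩
      rw [Matrix.mulVec_mulVec]
      congr 1
      ext i j
      simp [Matrix.mul_apply]
    | zero => 
      have : ((0 : Matrix n n G) * c).map g = 0 := by ext i j; simp
      rw [this, Matrix.zero_mulVec]; exact Submodule.zero_mem _
    | add X Y _ _ hX hY =>
      have : ((X + Y) * c).map g = (X * c).map g + (Y * c).map g := by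
        ext i j; simp [add_mul]
      rw [this, Matrix.add_mulVec]; exact Submodule.add_mem _ hX hY
    | smul a X _ hX =>
      have : ((a • X) * c).map g = a • (X * c).map g := by
        ext i j; simp
      rw [this, Matrix.smul_mulVec]; exact Submodule.smul_mem _ _ hX
  induction hu using Submodule.span_induction with
  | mem w hw => obtain ⟨t, ht, v, rfl⟩ := hw; exact key t ht v
  | zero => rw [Matrix.mulVec_zero]; exact Submodule.zero_mem _
  | add a b _ _ ha hb => rw [Matrix.mulVec_add]; exact Submodule.add_mem _ ha hb
  | smul a b _ hb => rw [Matrix.mulVec_smul]; exact Submodule.smul_mem _ _ hb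

theorem R_zero [IsAlgClosed k] (h : Setup π c) (hs : SimpleMM (k := k) c) (t : Matrix n n k)
    (ht : t ∈ h.R) : t = 0 := by
  rcases hs (RV h) (RV_stable h) with h0 | h0
  · refine Matrix.ext_of_mulVec_single fun j => ?_
    have : t.mulVec (Pi.single j 1) ∈ RV h := Submodule.subset_span ⟨t, ht, _, rfl⟩
    rw [h0, Submodule.mem_bot] at this
    rw [this, Matrix.zero_mulVec]
  · refine Matrix.ext_of_mulVec_single fun j => ?_
    rw [nak h.T h.R (fun r hr => ⟨hr.1, R_sub_J h ⟨r, hr.1⟩ hr⟩) h0 (Pi.single j 1),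
      Matrix.mulVec_zero, Matrix.mulVec_zero]

theorem core [IsAlgClosed k] (h : Setup π c) (hs : SimpleMM (k := k) c) :
    IsSemisimpleModule (FA k H) (CMod (mmCo k (c.map π))) := by
  have : IsArtinianRing h.T := IsArtinianRing.of_finite k h.T
  have hT : IsSemisimpleRing h.T := by
    rw [IsArtinianRing.isSemisimpleRing_iff_jacobson, eq_bot_iff]
    intro t ht
    exact Subtype.ext (R_zero h hs _ (J_sub_R h t ht))
  exact semi_transfer (h.hc.map π) inferInstance

end Fin
end QGP
open QG HopfAlgebra in
/-- A left- or right-normal quantum subgroup of an involutory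
(`S² = id`) linearly reductive quantum group is linearly reductive and normal. -/
theorem statement_1 (k : Type u) [Field k] [IsAlgClosed k]
    (G H : Type u) [Ring G] [HopfAlgebra k G] [Ring H] [HopfAlgebra k H]
    (π : G →ₐc[k] H) (hsurj : Function.Surjective π)
    (hcss : IsCosemisimple k G)
    (hinv : ∀ x : G, antipode (R := k) (A := G) (antipode (R := k) (A := G) x) = x)
    (hnorm : IsLeftNormal k G (π : G →ₗ[k] H) ∨ IsRightNormal k G (π : G →ₗ[k] H)) :
    IsCosemisimple k H ∧
      IsLeftNormal k G (π : G →ₗ[k] H) ∧ IsRightNormal k G (π : G →ₗ[k] H) := by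
  have hl : IsLeftNormal k G (π : G →ₗ[k] H) :=
    hnorm.elim id (QGP.right_to_left π hinv)
  refine ⟨QGP.reduce π hsurj hcss ?_, hl, QGP.left_to_right π hinv hl⟩
  intro n _ _ c hc hs
  exact QGP.core ⟨hinv, hl, hc, hcss⟩ hs
end

section
/- Let π: O(G) → O(H) be a surjective morphism of Hopf algebras with O(G) cosemisimple. Then the antipode S of O(G) satisfies S(ker π) = ker π, and consequently π is left-normal if and only if it is right-normal. -/
/- Common infrastructure: right comodules over coalgebras, simplicity,
cosemisimplicity, subcoalgebras, adjoint coactions, normality, etc. -/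

open TensorProduct

universe u

namespace QGP
open Coalgebra HopfAlgebra WithConv QG

section basic
variable {k : Type u} [Field k] {G : Type u} [Ring G] [HopfAlgebra k G]

/-- `f(x₁) x₂` -/
noncomputable def Lf (f : G →ₗ[k] k) : G →ₗ[k] G :=
  (TensorProduct.lid k G).toLinearMap ∘ₗ f.rTensor G ∘ₗ comul

/-- `x₁ f(x₂)` -/
noncomputable def Rf (f : G →ₗ[k] k) : G →ₗ[k] G :=
  (TensorProduct.rid k G).toLinearMap ∘ₗ f.lTensor G ∘ₗ comul

lemma Lf_repr (f : G →ₗ[k] k) {x : G} {ι : Type*} (r : Coalgebra.Repr k x ι) :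
    Lf f x = ∑ i ∈ r.index, f (r.left i) • r.right i := by
  simp [Lf, ← r.eq, map_sum]

lemma Rf_repr (f : G →ₗ[k] k) {x : G} {ι : Type*} (r : Coalgebra.Repr k x ι) :
    Rf f x = ∑ i ∈ r.index, f (r.right i) • r.left i := by
  simp [Rf, ← r.eq, map_sum]

lemma Lf_counit (x : G) : Lf (counit (R := k)) x = x := by
  simp [Lf]

lemma Rf_counit (x : G) : Rf (counit (R := k)) x = x := by
  simp [Rf]

lemma f_Rf (f g : G →ₗ[k] k) (x : G) : f (Rf g x) = g (Lf f x) := by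
  rw [Rf_repr g (ℛ k x), Lf_repr f (ℛ k x)]
  simp [map_sum, mul_comm]

/-- auxiliary evaluation -/
noncomputable def ev3 (f g : G →ₗ[k] k) : G ⊗[k] (G ⊗[k] G) →ₗ[k] G :=
  (TensorProduct.lid k G).toLinearMap ∘ₗ
    TensorProduct.map f ((TensorProduct.rid k G).toLinearMap ∘ₗ g.lTensor G)

/-- auxiliary evaluation -/
noncomputable def ev3' (f g : G →ₗ[k] k) : G ⊗[k] (G ⊗[k] G) →ₗ[k] G :=
  (TensorProduct.lid k G).toLinearMap ∘ₗ
    TensorProduct.map f ((TensorProduct.lid k G).toLinearMap ∘ₗ g.rTensor G)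

lemma Lf_Rf (f g : G →ₗ[k] k) (x : G) : Lf f (Rf g x) = Rf g (Lf f x) := by
  have h := congr(ev3 f g $(sum_tmul_tmul_eq (ℛ k x) (fun i => ℛ k ((ℛ k x).left i))
    (fun i => ℛ k ((ℛ k x).right i))))
  rw [Rf_repr g (ℛ k x), Lf_repr f (ℛ k x), map_sum, map_sum]
  simp only [map_smul, Lf_repr f (ℛ k ((ℛ k x).left _)), Rf_repr g (ℛ k ((ℛ k x).right _)),
    Finset.smul_sum]
  simp only [ev3, map_sum, LinearMap.comp_apply, TensorProduct.map_tmul, LinearMap.lTensor_tmul,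
    LinearEquiv.coe_coe, TensorProduct.lid_tmul, TensorProduct.rid_tmul] at h
  rw [← h]
  refine Finset.sum_congr rfl fun i _ => Finset.sum_congr rfl fun j _ => smul_comm _ _ _

lemma Lf_Lf (f g : G →ₗ[k] k) (x : G) : Lf g (Lf f x) = Lf (g ∘ₗ Lf f) x := by
  have h := congr(ev3' f g $(sum_tmul_tmul_eq (ℛ k x) (fun i => ℛ k ((ℛ k x).left i))
    (fun i => ℛ k ((ℛ k x).right i))))
  rw [Lf_repr (g ∘ₗ Lf f) (ℛ k x), Lf_repr f (ℛ k x), map_sum]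
  simp only [map_smul, LinearMap.comp_apply, Lf_repr f (ℛ k ((ℛ k x).left _)),
    Lf_repr g (ℛ k ((ℛ k x).right _)),
    Finset.smul_sum, map_sum, Finset.sum_smul]
  simp only [ev3', map_sum, LinearMap.comp_apply, TensorProduct.map_tmul, LinearMap.rTensor_tmul,
    LinearEquiv.coe_coe, TensorProduct.lid_tmul] at h
  rw [← h]
  simp [mul_smul]

/-- auxiliary evaluation -/
noncomputable def ev3'' (f g : G →ₗ[k] k) : G ⊗[k] (G ⊗[k] G) →ₗ[k] G :=
  (TensorProduct.rid k G).toLinearMap ∘ₗ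
    TensorProduct.map LinearMap.id ((TensorProduct.lid k k).toLinearMap ∘ₗ TensorProduct.map f g)

lemma Rf_Rf (f g : G →ₗ[k] k) (x : G) : Rf g (Rf f x) = Rf (g ∘ₗ Rf f) x := by
  have h := congr(ev3'' g f $(sum_tmul_tmul_eq (ℛ k x) (fun i => ℛ k ((ℛ k x).left i))
    (fun i => ℛ k ((ℛ k x).right i))))
  rw [Rf_repr (g ∘ₗ Rf f) (ℛ k x), Rf_repr f (ℛ k x), map_sum]
  simp only [map_smul, LinearMap.comp_apply, Rf_repr f (ℛ k ((ℛ k x).right _)),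
    Rf_repr g (ℛ k ((ℛ k x).left _)),
    Finset.smul_sum, map_sum, Finset.sum_smul]
  simp only [ev3'', map_sum, LinearMap.comp_apply, TensorProduct.map_tmul, LinearMap.id_apply,
    LinearEquiv.coe_coe, TensorProduct.lid_tmul, TensorProduct.rid_tmul] at h
  simp only [smul_eq_mul, mul_smul] at h ⊢
  calc _ = _ := ?_
    _ = _ := h
    _ = _ := ?_
  · refine Finset.sum_congr rfl fun i _ => Finset.sum_congr rfl fun j _ => smul_comm _ _ _
  · refine Finset.sum_congr rfl fun i _ => Finset.sum_congr rfl fun j _ => smul_comm _ _ _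

/-- bi-closed subspaces -/
def Closed (C : Submodule k G) : Prop :=
  ∀ c ∈ C, ∀ f : G →ₗ[k] k, Lf f c ∈ C ∧ Rf f c ∈ C

lemma exists_closed (x : G) : ∃ C : Submodule k G, FiniteDimensional k C ∧ x ∈ C ∧ Closed C := by
  let C : Submodule k G := Submodule.span k {y | ∃ f g : G →ₗ[k] k, y = Lf f (Rf g x)}
  refine ⟨C, ?_, ?_, ?_⟩
  · let F : Set G := ⋃ i ∈ (ℛ k x).index,
      (ℛ k ((ℛ k x).left i)).right '' (ℛ k ((ℛ k x).left i)).index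
    have hF : F.Finite := by
      refine Set.Finite.biUnion (Finset.finite_toSet _) fun i _ => ?_
      exact (Finset.finite_toSet _).image _
    have : FiniteDimensional k (Submodule.span k F) := FiniteDimensional.span_of_finite k hF
    have hle : C ≤ Submodule.span k F := by
      refine Submodule.span_le.2 ?_
      rintro y ⟨f, g, rfl⟩
      rw [Rf_repr g (ℛ k x), map_sum]
      refine Submodule.sum_mem _ fun i hi => ?_
      rw [map_smul, Lf_repr f (ℛ k ((ℛ k x).left i))]
      refine Submodule.smul_mem _ _ (Submodule.sum_mem _ fun j hj => Submodule.smul_mem _ _ ?_)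
      refine Submodule.subset_span (Set.mem_biUnion hi ⟨j, hj, rfl⟩)
    exact Submodule.finiteDimensional_of_le hle
  · exact Submodule.subset_span ⟨counit, counit, by rw [Rf_counit, Lf_counit]⟩
  · intro c hc f
    constructor
    · refine (Submodule.span_le (p := C.comap (Lf f))).2 ?_ hc
      rintro y ⟨f', g, rfl⟩
      exact Submodule.subset_span ⟨_, g, Lf_Lf _ _ _⟩
    · refine (Submodule.span_le (p := C.comap (Rf f))).2 ?_ hc
      rintro y ⟨f', g, rfl⟩
      exact Submodule.subset_span ⟨f', _, by rw [← Lf_Rf, Rf_Rf]⟩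

/-- a representation with right legs in `C` -/
lemma exists_repr {C : Submodule k G} (hC : Closed C) {x : G} (hx : x ∈ C) :
    ∃ (ι : Type u) (r : Coalgebra.Repr k x ι), ∀ i, r.right i ∈ C := by
  classical
  let b := Module.Basis.ofVectorSpace k G
  let t := TensorProduct.equivFinsuppOfBasisLeft (N := G) b (comul x)
  refine ⟨_, ⟨t.support, b, t, ?_⟩, ?_⟩
  · have := (TensorProduct.equivFinsuppOfBasisLeft (N := G) b).symm_apply_apply (comul x)
    rw [TensorProduct.equivFinsuppOfBasisLeft_symm_apply] at this
    exact this
  · intro i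
    have : t i = Lf (b.coord i) x := TensorProduct.equivFinsuppOfBasisLeft_apply _ _ _
    simp only [this]
    exact (hC x hx _).1

/-- antipode is an anti-coalgebra map -/
lemma comul_antipode (x : G) : comul (R := k) (antipode k x) =
    TensorProduct.map (antipode k) (antipode k) (TensorProduct.comm k G G (comul x)) := by
  let i1 : G →ₐ[k] G ⊗[k] G := Algebra.TensorProduct.includeLeft
  let i2 : G →ₐ[k] G ⊗[k] G := Algebra.TensorProduct.includeRight
  have h1 : toConv (i1.toLinearMap ∘ₗ antipode k) * toConv i1.toLinearMap = 1 := by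
    have := LinearMap.algHom_comp_convMul_distrib i1 (toConv (antipode k (A := G)))
      (toConv LinearMap.id)
    rw [LinearMap.antipode_mul_id] at this
    apply WithConv.ofConv_injective
    refine this.symm.trans ?_
    ext; simp
  have h2 : toConv (i2.toLinearMap ∘ₗ antipode k) * toConv i2.toLinearMap = 1 := by
    have := LinearMap.algHom_comp_convMul_distrib i2 (toConv (antipode k (A := G)))
      (toConv LinearMap.id)
    rw [LinearMap.antipode_mul_id] at this
    apply WithConv.ofConv_injective
    refine this.symm.trans ?_
    ext; simp [Algebra.algebraMap_eq_smul_one]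
  have hd : toConv i1.toLinearMap * toConv i2.toLinearMap = toConv (comul (R := k) (A := G)) := by
    ext x
    rw [(ℛ k x).convMul_apply]
    simp [i1, i2, (ℛ k x).eq]
  have hg : toConv (i2.toLinearMap ∘ₗ antipode k) * toConv (i1.toLinearMap ∘ₗ antipode k) =
      toConv (TensorProduct.map (antipode k) (antipode k) ∘ₗ
        (TensorProduct.comm k G G).toLinearMap ∘ₗ comul) := by
    ext x
    rw [(ℛ k x).convMul_apply]
    simp [i1, i2, ← (ℛ k x).eq]
  have hl : (toConv (i2.toLinearMap ∘ₗ antipode k) * toConv (i1.toLinearMap ∘ₗ antipode k)) *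
      toConv (comul (R := k) (A := G)) = 1 := by
    rw [← hd, mul_assoc, ← mul_assoc _ (toConv i1.toLinearMap), h1, one_mul, h2]
  have := left_inv_eq_right_inv hl LinearMap.comul_right_inv
  rw [hg] at this
  exact congr($this x).symm

/-- representation of the antipode -/
noncomputable def antiRepr {x : G} {ι : Type*} (r : Coalgebra.Repr k x ι) :
    Coalgebra.Repr k (antipode k x) ι where
  index := r.index
  left i := antipode k (r.right i)
  right i := antipode k (r.left i)
  eq := by rw [comul_antipode, ← r.eq]; simp

lemma map_antipode {H : Type u} [Ring H] [HopfAlgebra k H] (π : G →ₐc[k] H) (x : G) :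
    π (antipode k x) = antipode k (π x) := by
  let p : G →ₗ[k] H := (π : G →ₗ[k] H)
  have h1 : toConv (p ∘ₗ antipode k) * toConv p = 1 := by
    ext x
    rw [(ℛ k x).convMul_apply]
    have := congr(π $(sum_antipode_mul_eq_smul (ℛ k x)))
    simpa [p, Algebra.algebraMap_eq_smul_one] using this
  have h2 : toConv p * toConv (antipode k ∘ₗ p) = 1 := by
    have h := LinearMap.convMul_comp_coalgHom_distrib (toConv LinearMap.id)
      (toConv (antipode k (A := H))) (π : G →ₗc[k] H)
    rw [LinearMap.id_mul_antipode] at h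
    apply WithConv.ofConv_injective
    refine h.symm.trans ?_
    ext; simp
  exact congr($(left_inv_eq_right_inv h1 h2) x)

end basic
end QGP
namespace QGP
open Coalgebra HopfAlgebra WithConv QG

section main
variable {k : Type u} [Field k] {G : Type u} [Ring G] [HopfAlgebra k G]

/-- representation of a product -/
noncomputable def mulRepr {x y : G} {ι κ : Type*} (r : Coalgebra.Repr k x ι)
    (s : Coalgebra.Repr k y κ) : Coalgebra.Repr k (x * y) (ι × κ) where
  index := r.index ×ˢ s.index
  left i := r.left i.1 * s.left i.2
  right i := r.right i.1 * s.right i.2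
  eq := by
    rw [Bialgebra.comul_mul, ← r.eq, ← s.eq, Finset.sum_mul_sum, Finset.sum_product]
    simp

lemma inv_R (h : G →ₗ[k] k) (hinv : ∀ x, Lf h x = h x • (1 : G)) (x y : G)
    {ι : Type*} (r : Coalgebra.Repr k y ι) :
    Lf (h ∘ₗ LinearMap.mulRight k y) x =
      ∑ i ∈ r.index, h (x * r.left i) • antipode k (r.right i) := by
  let A : G →ₗ[k] G := ∑ j ∈ (ℛ k x).index,
    (h ∘ₗ LinearMap.mulLeft k ((ℛ k x).left j)).smulRight ((ℛ k x).right j)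
  let B : G →ₗ[k] G := (h ∘ₗ LinearMap.mulLeft k x).smulRight 1
  have hA : ∀ y, A y = Lf (h ∘ₗ LinearMap.mulRight k y) x := by
    intro y
    rw [Lf_repr _ (ℛ k x)]
    simp [A]
  have hAB : toConv A * toConv LinearMap.id = toConv B := by
    ext y
    rw [(ℛ k y).convMul_apply]
    have := hinv (x * y)
    rw [Lf_repr _ (mulRepr (ℛ k x) (ℛ k y))] at this
    simp only [mulRepr, Finset.sum_product] at this
    rw [Finset.sum_comm] at this
    simpa [A, B, Finset.sum_mul] using this
  have hfin : toConv A = toConv B * toConv (antipode k) := by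
    rw [← hAB, mul_assoc, LinearMap.id_mul_antipode, mul_one]
  rw [← hA]
  have := congr($hfin y)
  rw [r.convMul_apply] at this
  simpa [B] using this

variable (h : G →ₗ[k] k) (hinv : ∀ x, Lf h x = h x • (1 : G)) (h1 : h 1 = 1)
  (C : Submodule k G) [FiniteDimensional k C] (hC : Closed C)

/-- the form `h(x S(c))` on `C` -/
noncomputable def form : C →ₗ[k] Module.Dual k C :=
  LinearMap.mk₂ k (fun x c => h ((x : G) * antipode k (c : G)))
    (by intros; simp [add_mul]) (by intros; simp) (by intros; simp [mul_add]) (by intros; simp)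

include hinv in
lemma form_R' (x c : G) {ι : Type*} (r : Coalgebra.Repr k c ι) :
    Lf (h ∘ₗ LinearMap.mulRight k (antipode k c)) x =
      ∑ i ∈ r.index, h (x * antipode k (r.right i)) • antipode k (antipode k (r.left i)) :=
  inv_R h hinv x _ (antiRepr r)

include hinv h1 hC in
lemma form_ker_counit (x : G) (hx : x ∈ C) (hE : ∀ c ∈ C, h (x * antipode k c) = 0) :
    counit (R := k) x = 0 := by
  have hL : ∀ c ∈ C, Lf (h ∘ₗ LinearMap.mulRight k (antipode k c)) x = 0 := by
    intro c hc
    obtain ⟨ι, r, hr⟩ := exists_repr hC hc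
    rw [form_R' h hinv x c r]
    exact Finset.sum_eq_zero fun i _ => by rw [hE _ (hr i), zero_smul]
  obtain ⟨ι, r, hr⟩ := exists_repr hC hx
  have hs := congr(h $(sum_mul_antipode_eq_smul r))
  rw [map_smul, h1, smul_eq_mul, mul_one, map_sum] at hs
  rw [← hs]
  let b := Module.finBasis k C
  have hexp : ∀ i, r.right i = ∑ j, b.repr ⟨r.right i, hr i⟩ j • (b j : G) := by
    intro i
    have := congrArg C.subtype (b.sum_repr ⟨r.right i, hr i⟩)
    rw [map_sum] at this
    exact this.symm
  have : ∀ i, h (r.left i * antipode k (r.right i)) =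
      ∑ j, b.repr ⟨r.right i, hr i⟩ j * h (r.left i * antipode k (b j : G)) := by
    intro i
    conv_lhs => rw [hexp i]
    simp [Finset.mul_sum]
  simp only [this]
  rw [Finset.sum_comm]
  refine Finset.sum_eq_zero fun j _ => ?_
  have hz := hL (b j) (b j).2
  rw [Lf_repr _ r] at hz
  have hz' : ∑ i ∈ r.index, h (r.left i * antipode k (b j : G)) • (⟨r.right i, hr i⟩ : C) = 0 := by
    apply Subtype.ext
    simpa using hz
  have := congrArg (b.coord j) hz'
  rw [map_sum, map_zero] at this
  rw [← this]
  exact Finset.sum_congr rfl fun i _ => by rw [map_smul, smul_eq_mul, mul_comm]; rfl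

include hinv h1 hC in
lemma form_injective : Function.Injective (form h C) := by
  rw [← LinearMap.ker_eq_bot, LinearMap.ker_eq_bot']
  intro x hx
  have hE : ∀ c ∈ C, h ((x : G) * antipode k c) = 0 := fun c hc => congr($hx ⟨c, hc⟩)
  have hL : ∀ c ∈ C, Lf (h ∘ₗ LinearMap.mulRight k (antipode k c)) (x : G) = 0 := by
    intro c hc
    obtain ⟨ι, r, hr⟩ := exists_repr hC hc
    rw [form_R' h hinv _ c r]
    exact Finset.sum_eq_zero fun i _ => by rw [hE _ (hr i), zero_smul]
  have key : ∀ f : G →ₗ[k] k, f x = 0 := by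
    intro f
    have := form_ker_counit h hinv h1 C hC (Rf f x) (hC x x.2 f).2 (fun c hc => by
      have := f_Rf (h ∘ₗ LinearMap.mulRight k (antipode k c)) f (x : G)
      rw [hL c hc, map_zero] at this
      simpa using this)
    rw [f_Rf, Lf_counit] at this
    exact this
  exact Subtype.ext ((Module.forall_dual_apply_eq_zero_iff k (x : G)).1 key)

include hinv h1 hC in
lemma form_surjective : Function.Surjective (form h C) :=
  (LinearMap.injective_iff_surjective_of_finrank_eq_finrank
    (Subspace.dual_finrank_eq).symm).1 (form_injective h hinv h1 C hC)

include hinv h1 hC in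
lemma antipode_inj_on (c : G) (hc : c ∈ C) (hS : antipode k c = 0) : c = 0 := by
  have : (⟨c, hc⟩ : C) = 0 := by
    rw [← Module.forall_dual_apply_eq_zero_iff k]
    intro f
    obtain ⟨x, rfl⟩ := form_surjective h hinv h1 C hC f
    simp [form, hS]
  exact congr(($this : G))

include hinv h1 hC in
lemma antipode_sq_mem (c : G) (hc : c ∈ C) : antipode k (antipode k c) ∈ C := by
  obtain ⟨e, he⟩ := form_surjective h hinv h1 C hC (counit (R := k) ∘ₗ C.subtype)
  have he' : ∀ c ∈ C, h ((e : G) * antipode k c) = counit (R := k) c :=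
    fun c hc => congr($he ⟨c, hc⟩)
  obtain ⟨ι, r, hr⟩ := exists_repr hC hc
  have := form_R' h hinv (e : G) c r
  have h2 := Rf_counit (k := k) c
  rw [Rf_repr _ r] at h2
  have h3 : Lf (h ∘ₗ LinearMap.mulRight k (antipode k c)) (e : G) =
      antipode k (antipode k c) := by
    rw [this]
    conv_rhs => rw [← h2]
    simp only [map_sum, map_smul]
    exact Finset.sum_congr rfl fun i _ => by rw [he' _ (hr i)]
  rw [← h3]
  exact (hC e e.2 _).1

include hinv h1 in
lemma antipode_injective : Function.Injective (antipode k (A := G)) := by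
  rw [← LinearMap.ker_eq_bot, LinearMap.ker_eq_bot']
  intro x hx
  obtain ⟨C, _, hxC, hC⟩ := exists_closed (k := k) x
  exact antipode_inj_on h hinv h1 C hC x hxC hx

include hinv h1 in
lemma le_map_antipode (K : Submodule k G) (hK : ∀ x ∈ K, antipode k x ∈ K) :
    K.map (antipode k) = K := by
  apply le_antisymm
  · rintro _ ⟨x, hx, rfl⟩
    exact hK x hx
  intro x hx
  obtain ⟨C, _, hxC, hC⟩ := exists_closed (k := k) x
  let T : (K ⊓ C : Submodule k G) →ₗ[k] (K ⊓ C : Submodule k G) :=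
    (antipode k ∘ₗ antipode k).restrict
      (fun y hy => ⟨hK _ (hK _ hy.1), antipode_sq_mem h hinv h1 C hC y hy.2⟩)
  have hT : Function.Injective T := by
    intro a b hab
    have := congr(($hab : G))
    exact Subtype.ext (antipode_injective h hinv h1 (antipode_injective h hinv h1 this))
  have : FiniteDimensional k (K ⊓ C : Submodule k G) :=
    Submodule.finiteDimensional_of_le (inf_le_right : K ⊓ C ≤ C)
  obtain ⟨y, hy⟩ := LinearMap.injective_iff_surjective.1 hT ⟨x, hx, hxC⟩
  exact ⟨antipode k (y : G), hK _ y.2.1, congr(($hy : G))⟩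

end main

section integral
variable {k : Type u} [Field k] {G : Type u} [Ring G] [HopfAlgebra k G]

lemma exists_integral (hcss : IsCosemisimple k G) :
    ∃ h : G →ₗ[k] k, (∀ x, Lf h x = h x • (1 : G)) ∧ h 1 = 1 := by
  classical
  have hcom : IsComod k G (comul (R := k) (A := G)) := by
    constructor
    · intro v
      exact (coassoc_symm_apply v).symm
    · intro v
      simp
  obtain ⟨ι, U, hU, hind, htop⟩ := hcss G comul hcom
  -- complements
  let W : ι → Submodule k G := fun i => ⨆ (j) (_ : j ≠ i), U j
  have hcompl : ∀ i, IsCompl (U i) (W i) := by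
    intro i
    refine ⟨hind i, ?_⟩
    rw [codisjoint_iff, eq_top_iff, ← htop]
    refine iSup_le fun j => ?_
    by_cases hj : j = i
    · subst hj; exact le_sup_left
    · exact le_trans (le_iSup₂_of_le j hj le_rfl) le_sup_right
  let p : ι → G →ₗ[k] G := fun i => (U i).projection (W i) (hcompl i)
  have hpU : ∀ i, ∀ x ∈ U i, p i x = x := fun i x hx =>
    Submodule.projection_apply_of_mem_left _ hx
  have hpW : ∀ i, ∀ x ∈ W i, p i x = 0 := fun i x hx =>
    (Submodule.projection_apply_eq_zero_iff _).2 hx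
  have hpj : ∀ i j, j ≠ i → ∀ x ∈ U j, p i x = 0 := fun i j hj x hx =>
    hpW i x ((le_iSup₂_of_le j hj le_rfl : U j ≤ W i) hx)
  have hpm : ∀ i x, p i x ∈ U i := fun i x => Submodule.projection_apply_mem _ _
  have hcomm : ∀ i x, comul (R := k) (p i x) = (p i).rTensor G (comul x) := by
    intro i x
    have hx : x ∈ ⨆ i, U i := htop ▸ Submodule.mem_top
    induction hx using Submodule.iSup_induction' with
    | zero => simp
    | add x y _ _ hx hy => simp only [map_add, hx, hy]
    | mem j x hx =>
      obtain ⟨t, ht⟩ := (hU j).1 x hx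
      by_cases hj : j = i
      · subst hj
        rw [hpU _ x hx, ← ht, ← LinearMap.comp_apply, ← LinearMap.rTensor_comp]
        congr 2
        ext y
        simp [hpU _ _ y.2]
      · rw [hpj i j hj x hx, ← ht, ← LinearMap.comp_apply, ← LinearMap.rTensor_comp]
        have : p i ∘ₗ (U j).subtype = 0 := by
          ext y
          simp [hpj i j hj _ y.2]
        rw [this]; simp
  have hLf : ∀ i x, Lf (counit ∘ₗ p i) x = p i x := by
    intro i x
    conv_rhs => rw [← Lf_counit (k := k) (p i x)]
    simp [Lf, hcomm, LinearMap.rTensor_comp]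
  have hp1 : ∀ i, p i 1 = counit (R := k) (p i 1) • (1 : G) := by
    intro i
    rw [← hLf i 1]
    simp [Lf, Algebra.TensorProduct.one_def]
  have h1m : (1 : G) ∈ ⨆ i, U i := htop ▸ Submodule.mem_top
  obtain ⟨i, hi⟩ : ∃ i, p i 1 ≠ 0 := by
    by_contra! hcon
    obtain ⟨f, hf, hs⟩ := (Submodule.mem_iSup_iff_exists_finsupp _ _).1 h1m
    have hz : ∀ i, f i = 0 := by
      intro i
      rw [← hcon i, ← hs, Finsupp.sum, map_sum]
      by_cases his : i ∈ f.support
      · rw [Finset.sum_eq_single i (fun j _ hj => hpj i j hj _ (hf j)) (fun h => (h his).elim),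
          hpU _ _ (hf i)]
      · rw [Finset.sum_eq_zero]
        · simpa using his
        · intro j hj
          exact hpj i j (fun h => his (h ▸ hj)) _ (hf j)
    have : (1 : G) = 0 := by
      rw [← hs, Finsupp.sum]
      exact Finset.sum_eq_zero fun i _ => hz i
    have h2 : counit (R := k) (1 : G) = 0 := by rw [this, map_zero]
    simp at h2
  have hne : counit (R := k) (p i 1) ≠ 0 := by
    intro h0
    apply hi
    rw [hp1 i, h0, zero_smul]
  have h1U : (1 : G) ∈ U i := by
    have := (U i).smul_mem (counit (R := k) (p i 1))⁻¹ (hpm i 1)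
    rwa [hp1 i, map_smul, smul_smul, Bialgebra.counit_one, smul_eq_mul, mul_one,
      inv_mul_cancel₀ hne, one_smul] at this
  have hspan : Submodule.span k {(1 : G)} = U i := by
    refine ((hU i).2.2 (Submodule.span k {(1 : G)}) ?_ ?_).resolve_left ?_
    · simpa using h1U
    · intro u hu
      obtain ⟨c, rfl⟩ := Submodule.mem_span_singleton.1 hu
      refine ⟨(⟨c • 1, hu⟩ : Submodule.span k {(1 : G)}) ⊗ₜ 1, ?_⟩
      simp [Algebra.TensorProduct.one_def, TensorProduct.smul_tmul']
    · rw [Submodule.span_singleton_eq_bot]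
      intro h0
      exact hi (by rw [h0, map_zero])
  refine ⟨counit ∘ₗ p i, ?_, ?_⟩
  · intro x
    rw [hLf]
    obtain ⟨c, hc⟩ := Submodule.mem_span_singleton.1 (hspan ▸ hpm i x)
    simp [← hc]
  · simp [hpU i 1 h1U]

end integral

section normal
variable {k : Type u} [Field k] {G : Type u} [Ring G] [HopfAlgebra k G]

lemma adR_antipode (x : G) : adR k G (antipode k x) =
    TensorProduct.comm k G G (TensorProduct.map (antipode k) (antipode k) (adL k G x)) := by
  let T : G ⊗[k] (G ⊗[k] G) →ₗ[k] G ⊗[k] G :=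
    (TensorProduct.comm k G G).toLinearMap ∘ₗ TensorProduct.map (antipode k) (antipode k) ∘ₗ
    ((LinearMap.mul' k G).rTensor G) ∘ₗ
    (TensorProduct.assoc k G G G).symm.toLinearMap ∘ₗ
    (((TensorProduct.comm k G G).toLinearMap).lTensor G) ∘ₗ
    (((HopfAlgebra.antipode (R := k) (A := G)).lTensor G).lTensor G)
  have hh := congr(T $(sum_tmul_tmul_eq (ℛ k x) (fun i => ℛ k ((ℛ k x).left i))
    (fun i => ℛ k ((ℛ k x).right i))))
  have hR : TensorProduct.comm k G G (TensorProduct.map (antipode k) (antipode k) (adL k G x)) =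
      T (∑ i ∈ (ℛ k x).index, ∑ j ∈ (ℛ k ((ℛ k x).right i)).index,
      (ℛ k x).left i ⊗ₜ[k] ((ℛ k ((ℛ k x).right i)).left j ⊗ₜ[k]
        (ℛ k ((ℛ k x).right i)).right j)) := by
    have : comul2 k G x = ∑ i ∈ (ℛ k x).index, ∑ j ∈ (ℛ k ((ℛ k x).right i)).index,
      (ℛ k x).left i ⊗ₜ[k] ((ℛ k ((ℛ k x).right i)).left j ⊗ₜ[k]
        (ℛ k ((ℛ k x).right i)).right j) := by
      simp only [comul2, LinearMap.comp_apply]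
      simp only [← TensorProduct.tmul_sum, (ℛ k _).eq]
      have := congrArg ((comul (R := k) (A := G)).lTensor G) (ℛ k x).eq
      rw [map_sum] at this
      exact this.symm
    rw [← this]
    rfl
  rw [hR, ← hh]
  have : comul2 k G (antipode k x) =
      ∑ i ∈ (ℛ k x).index, ∑ j ∈ (ℛ k ((ℛ k x).left i)).index,
      antipode k ((ℛ k x).right i) ⊗ₜ[k] (antipode k ((ℛ k ((ℛ k x).left i)).right j) ⊗ₜ[k]
        antipode k ((ℛ k ((ℛ k x).left i)).left j)) := by
    simp only [comul2, LinearMap.comp_apply]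
    rw [← (antiRepr (ℛ k x)).eq]
    simp only [map_sum, LinearMap.lTensor_tmul, antiRepr]
    refine Finset.sum_congr rfl fun i _ => ?_
    rw [← (antiRepr (ℛ k ((ℛ k x).left i))).eq, TensorProduct.tmul_sum]
    rfl
  simp only [adR, LinearMap.comp_apply]
  rw [this]
  simp [T, antipode_mul_antidistrib]

lemma descends_iff {A B D : Type u} [AddCommGroup A] [Module k A] [AddCommGroup B] [Module k B]
    [AddCommGroup D] [Module k D] (p : A →ₗ[k] B) (hp : Function.Surjective p) (φ : A →ₗ[k] D) :
    (∃ ρ : B →ₗ[k] D, ρ ∘ₗ p = φ) ↔ ∀ x ∈ LinearMap.ker p, φ x = 0 := by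
  constructor
  · rintro ⟨ρ, rfl⟩ x hx
    simp [LinearMap.mem_ker.1 hx]
  · intro hφ
    obtain ⟨s, hs⟩ := p.exists_rightInverse_of_surjective (LinearMap.range_eq_top.2 hp)
    refine ⟨φ ∘ₗ s, ?_⟩
    ext x
    have : φ (s (p x) - x) = 0 := hφ _ (by
      have := congr($hs (p x))
      simp at this
      simp [this])
    rw [map_sub, sub_eq_zero] at this
    exact this

end normal
end QGP

open QG HopfAlgebra in
/-- If `π : O(G) → O(H)` is a surjective morphism of Hopf
algebras with `O(G)` cosemisimple, then the antipode `S` of `O(G)` satisfies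
`S(ker π) = ker π`, and `π` is left-normal iff it is right-normal. -/
theorem statement_3 (k : Type u) [Field k] [IsAlgClosed k]
    (G H : Type u) [Ring G] [HopfAlgebra k G] [Ring H] [HopfAlgebra k H]
    (π : G →ₐc[k] H) (hsurj : Function.Surjective π)
    (hcss : IsCosemisimple k G) :
    (LinearMap.ker (π : G →ₗ[k] H)).map (antipode (R := k) (A := G)) =
      LinearMap.ker (π : G →ₗ[k] H) ∧
    (IsLeftNormal k G (π : G →ₗ[k] H) ↔ IsRightNormal k G (π : G →ₗ[k] H)) := by
  obtain ⟨h, hinv, h1⟩ := QGP.exists_integral hcss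
  have hSinj := QGP.antipode_injective h hinv h1
  have hK : (LinearMap.ker (π : G →ₗ[k] H)).map (antipode (R := k) (A := G)) =
      LinearMap.ker (π : G →ₗ[k] H) := by
    refine QGP.le_map_antipode h hinv h1 _ fun x hx => ?_
    have hx' : π x = 0 := hx
    change π (antipode k x) = 0
    rw [QGP.map_antipode, hx', map_zero]
  refine ⟨hK, ?_⟩
  have hSH : Function.Injective (antipode k (A := H)) := by
    rw [← LinearMap.ker_eq_bot, LinearMap.ker_eq_bot']
    intro y hy
    obtain ⟨x, rfl⟩ := hsurj y
    rw [← QGP.map_antipode] at hy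
    have hm : antipode k x ∈ LinearMap.ker (π : G →ₗ[k] H) := hy
    rw [← hK] at hm
    obtain ⟨z, hz, hzx⟩ := hm
    rw [← hSinj hzx]
    exact hz
  have hcompS : (π : G →ₗ[k] H) ∘ₗ antipode k = antipode k ∘ₗ (π : G →ₗ[k] H) :=
    LinearMap.ext fun x => QGP.map_antipode π x
  have hkey : ∀ x : G, ((π : G →ₗ[k] H).rTensor G) (adR k G (antipode k x)) =
      TensorProduct.comm k G H (TensorProduct.map (antipode k) (antipode k)
        (((π : G →ₗ[k] H).lTensor G) (adL k G x))) := by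
    intro x
    rw [QGP.adR_antipode]
    generalize adL k G x = t
    induction t with
    | zero => simp
    | add a b ha hb => simp only [map_add, ha, hb]
    | tmul a b => simp [QGP.map_antipode]
  have hinjT : Function.Injective (TensorProduct.map (antipode k (A := G)) (antipode k (A := H))) :=
    TensorProduct.map_injective_of_flat_flat _ _ hSinj hSH
  unfold IsLeftNormal IsRightNormal
  rw [QGP.descends_iff (π : G →ₗ[k] H) hsurj, QGP.descends_iff (π : G →ₗ[k] H) hsurj]
  constructor
  · intro hl x hx
    rw [← hK] at hx
    obtain ⟨y, hy, rfl⟩ := hx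
    have := hl y hy
    rw [LinearMap.comp_apply] at this ⊢
    rw [hkey, this]
    simp
  · intro hr x hx
    have hSx : antipode k x ∈ LinearMap.ker (π : G →ₗ[k] H) := hK ▸ ⟨x, hx, rfl⟩
    have := hr _ hSx
    rw [LinearMap.comp_apply] at this ⊢
    rw [hkey, LinearEquiv.map_eq_zero_iff] at this
    exact hinjT (by rw [this, map_zero])
end

section
/- Let π: O(G) → O(H) be a surjective Hopf algebra morphism with O(G) cosemisimple, and suppose A := O(G/H) = O(H\G) is a Hopf subalgebra of O(G). Then A is exactly the direct sum ⊕ C_U of the coefficient coalgebras C_U = U* ⊗ U over those simple right O(G)-comodules U ∈ Ĝ whose restriction to O(H) contains a nonzero invariant vector. -/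
/- Common infrastructure: right comodules over coalgebras, simplicity,
cosemisimplicity, subcoalgebras, adjoint coactions, normality, etc. -/

open TensorProduct

universe u

namespace QG

/-- A Hopf subalgebra, as a submodule: a subalgebra which is a subcoalgebra
and is invariant under the antipode. -/
def IsHopfSubalgebra (k : Type u) [Field k] (G : Type u) [Ring G] [HopfAlgebra k G]
    (D : Submodule k G) : Prop :=
  (1 : G) ∈ D ∧ (∀ x ∈ D, ∀ y ∈ D, x * y ∈ D) ∧ IsSubcoalgebra k G D ∧
    D.map (HopfAlgebra.antipode (R := k) (A := G)) ≤ D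

end QG

namespace QG4

open TensorProduct QG

variable {k : Type u} [Field k]

section slices
variable {V W C D : Type u} [AddCommGroup V] [Module k V] [AddCommGroup W] [Module k W]
  [AddCommGroup C] [Module k C] [AddCommGroup D] [Module k D]

noncomputable def slR (f : C →ₗ[k] k) : V ⊗[k] C →ₗ[k] V :=
  (TensorProduct.rid k V).toLinearMap ∘ₗ f.lTensor V

noncomputable def slL (g : V →ₗ[k] k) : V ⊗[k] C →ₗ[k] C :=
  (TensorProduct.lid k C).toLinearMap ∘ₗ g.rTensor C

@[simp] lemma slR_tmul (f : C →ₗ[k] k) (v : V) (c : C) : slR f (v ⊗ₜ[k] c) = f c • v := by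
  simp [slR]

@[simp] lemma slL_tmul (g : V →ₗ[k] k) (v : V) (c : C) : slL g (v ⊗ₜ[k] c) = g v • c := by
  simp [slL]

lemma slR_ext {s t : V ⊗[k] C} (h : ∀ f : C →ₗ[k] k, slR f s = slR f t) : s = t := by
  classical
  let b := Module.Basis.ofVectorSpace k C
  apply (TensorProduct.equivFinsuppOfBasisRight (M := V) b).injective
  ext i
  rw [TensorProduct.equivFinsuppOfBasisRight_apply, TensorProduct.equivFinsuppOfBasisRight_apply]
  exact h _

lemma slL_ext {s t : V ⊗[k] C} (h : ∀ g : V →ₗ[k] k, slL g s = slL g t) : s = t := by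
  classical
  let b := Module.Basis.ofVectorSpace k V
  apply (TensorProduct.equivFinsuppOfBasisLeft (N := C) b).injective
  ext i
  rw [TensorProduct.equivFinsuppOfBasisLeft_apply, TensorProduct.equivFinsuppOfBasisLeft_apply]
  exact h _

lemma slR_rTensor (h : V →ₗ[k] W) (f : C →ₗ[k] k) (t : V ⊗[k] C) :
    slR f (h.rTensor C t) = h (slR f t) := by
  induction t with
  | zero => simp
  | tmul v c => simp
  | add x y hx hy => simp only [map_add, hx, hy]

lemma slR_lTensor (h : C →ₗ[k] D) (f : D →ₗ[k] k) (t : V ⊗[k] C) :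
    slR f (h.lTensor V t) = slR (f ∘ₗ h) t := by
  induction t with
  | zero => simp
  | tmul v c => simp
  | add x y hx hy => simp only [map_add, hx, hy]

lemma slL_lTensor (h : C →ₗ[k] D) (g : V →ₗ[k] k) (t : V ⊗[k] C) :
    slL g (h.lTensor V t) = h (slL g t) := by
  induction t with
  | zero => simp
  | tmul v c => simp
  | add x y hx hy => simp only [map_add, hx, hy]

lemma slL_rTensor (h : V →ₗ[k] W) (g : W →ₗ[k] k) (t : V ⊗[k] C) :
    slL g (h.rTensor C t) = slL (g ∘ₗ h) t := by
  induction t with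
  | zero => simp
  | tmul v c => simp
  | add x y hx hy => simp only [map_add, hx, hy]

lemma mem_range_rTensor_iff (U : Submodule k V) (t : V ⊗[k] C) :
    t ∈ LinearMap.range (U.subtype.rTensor C) ↔ ∀ f : C →ₗ[k] k, slR f t ∈ U := by
  constructor
  · rintro ⟨s, rfl⟩ f
    rw [slR_rTensor]
    exact (slR f s).2
  · intro h
    have ex := rTensor_exact C (LinearMap.exact_subtype_mkQ U) (Submodule.mkQ_surjective U)
    refine (ex t).1 (slR_ext fun f => ?_)
    rw [slR_rTensor, map_zero]
    exact (Submodule.Quotient.mk_eq_zero U).2 (h f)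

lemma mem_range_lTensor_iff (U : Submodule k C) (t : V ⊗[k] C) :
    t ∈ LinearMap.range (U.subtype.lTensor V) ↔ ∀ g : V →ₗ[k] k, slL g t ∈ U := by
  constructor
  · rintro ⟨s, rfl⟩ f
    rw [slL_lTensor]
    exact (slL f s).2
  · intro h
    have ex := lTensor_exact V (LinearMap.exact_subtype_mkQ U) (Submodule.mkQ_surjective U)
    refine (ex t).1 (slL_ext fun f => ?_)
    rw [slL_lTensor, map_zero]
    exact (Submodule.Quotient.mk_eq_zero U).2 (h f)

end slices

section comod
variable {C : Type u} [AddCommGroup C] [Module k C] [Coalgebra k C]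
variable {V W : Type u} [AddCommGroup V] [Module k V] [AddCommGroup W] [Module k W]

noncomputable def act (ρ : V →ₗ[k] V ⊗[k] C) (f : C →ₗ[k] k) : Module.End k V := slR f ∘ₗ ρ

noncomputable def coef (ρ : V →ₗ[k] V ⊗[k] C) (g : V →ₗ[k] k) : V →ₗ[k] C := slL g ∘ₗ ρ

lemma isSubcomod_iff (ρ : V →ₗ[k] V ⊗[k] C) (U : Submodule k V) :
    IsSubcomod k C ρ U ↔ ∀ f : C →ₗ[k] k, ∀ u ∈ U, act ρ f u ∈ U := by
  unfold IsSubcomod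
  simp_rw [mem_range_rTensor_iff]
  exact ⟨fun h f u hu => h u hu f, fun h u hu f => h f u hu⟩

lemma coeffSpace_eq (ρ : V →ₗ[k] V ⊗[k] C) :
    coeffSpace k C ρ = ⨆ g : V →ₗ[k] k, LinearMap.range (coef ρ g) := by
  apply le_antisymm
  · apply sInf_le
    intro v
    rw [mem_range_lTensor_iff]
    intro g
    exact Submodule.mem_iSup_of_mem g ⟨v, rfl⟩
  · refine iSup_le fun g => le_sInf fun D hD => ?_
    rintro _ ⟨v, rfl⟩
    exact (mem_range_lTensor_iff _ _).1 (hD v) g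

lemma aux1 (f : C →ₗ[k] k) (g : V →ₗ[k] k) (t : V ⊗[k] C) :
    slR f (Coalgebra.comul (R := k) (slL g t)) =
      slL g (slR f ((TensorProduct.assoc k V C C).symm.toLinearMap
        ((Coalgebra.comul (R := k) (A := C)).lTensor V t))) := by
  induction t with
  | zero => simp
  | add x y hx hy => simp only [map_add, hx, hy]
  | tmul v c =>
    simp only [slL_tmul, map_smul, LinearMap.lTensor_tmul]
    generalize Coalgebra.comul (R := k) c = s
    induction s with
    | zero => simp
    | tmul a b =>
      simp only [slR_tmul, LinearEquiv.coe_coe, TensorProduct.assoc_symm_tmul, map_smul, slL_tmul]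
      exact smul_comm _ _ _
    | add x y hx hy => simp only [map_add, TensorProduct.tmul_add, smul_add, hx, hy]

lemma coef_act {ρ : V →ₗ[k] V ⊗[k] C} (h : IsComod k C ρ) (f : C →ₗ[k] k) (g : V →ₗ[k] k)
    (v : V) : coef ρ g (act ρ f v) = act (Coalgebra.comul (R := k) (A := C)) f (coef ρ g v) := by
  simp only [coef, act, LinearMap.comp_apply]
  rw [aux1, ← h.coassoc, slR_rTensor]

lemma counit_coef {ρ : V →ₗ[k] V ⊗[k] C} (h : IsComod k C ρ) (g : V →ₗ[k] k)
    (v : V) : Coalgebra.counit (R := k) (coef ρ g v) = g v := by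
  have h1 := congrArg g (h.counit v)
  rw [← h1]
  simp only [coef, LinearMap.comp_apply]
  generalize ρ v = t
  induction t with
  | zero => simp
  | tmul a b => simp [mul_comm]
  | add x y hx hy => simp only [map_add, hx, hy]

lemma isComod_comul : IsComod k C (Coalgebra.comul (R := k) (A := C)) where
  coassoc v := by
    rw [← Coalgebra.coassoc_apply]
    exact ((TensorProduct.assoc k C C C).symm_apply_apply _).symm
  counit v := by simp

lemma coef_counit (x : C) :
    coef (Coalgebra.comul (R := k) (A := C)) (Coalgebra.counit (R := k)) x = x := by
  simp [coef, slL]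

/-- Restriction of a coaction to a subcomodule. -/
lemma exists_restrict {ρ : V →ₗ[k] V ⊗[k] C} (h : IsComod k C ρ) (U : Submodule k V)
    (hU : IsSubcomod k C ρ U) : ∃ ρU : U →ₗ[k] U ⊗[k] C, IsComod k C ρU ∧
      (∀ u : U, U.subtype.rTensor C (ρU u) = ρ u) := by
  have inj : Function.Injective (U.subtype.rTensor C) :=
    Module.Flat.rTensor_preserves_injective_linearMap _ U.subtype_injective
  let e := LinearEquiv.ofInjective _ inj
  let ρU : U →ₗ[k] U ⊗[k] C := e.symm.toLinearMap ∘ₗ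
    (ρ ∘ₗ U.subtype).codRestrict _ (fun u => hU u u.2)
  have hρ : ∀ u : U, U.subtype.rTensor C (ρU u) = ρ u := by
    intro u
    have := congrArg Subtype.val (e.apply_symm_apply ⟨ρ u, hU u u.2⟩)
    exact this
  have hρ' : U.subtype.rTensor C ∘ₗ ρU = ρ ∘ₗ U.subtype := LinearMap.ext hρ
  refine ⟨ρU, ⟨fun v => ?_, fun v => ?_⟩, hρ⟩
  · have inj2 : Function.Injective ((U.subtype.rTensor C).rTensor C) :=
      Module.Flat.rTensor_preserves_injective_linearMap _ inj
    apply inj2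
    have h1 := h.coassoc v
    rw [← hρ v] at h1
    rw [← LinearMap.comp_apply, ← LinearMap.rTensor_comp, hρ', LinearMap.rTensor_comp,
      LinearMap.comp_apply, h1]
    generalize ρU v = t
    induction t with
    | zero => simp
    | add x y hx hy => simp only [map_add, hx, hy]
    | tmul v c =>
      simp only [LinearMap.lTensor_tmul, LinearMap.rTensor_tmul]
      generalize Coalgebra.comul (R := k) c = s
      induction s with
      | zero => simp
      | tmul a b => simp
      | add x y hx hy => simp only [map_add, TensorProduct.tmul_add, hx, hy]
  · apply U.subtype_injective
    have h1 := h.counit v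
    rw [← hρ v] at h1
    have := slR_rTensor U.subtype (Coalgebra.counit (R := k) (A := C)) (ρU v)
    exact this.symm.trans h1

lemma exists_simple {ρ : V →ₗ[k] V ⊗[k] C} (h : IsComod k C ρ) (M : Submodule k V)
    (hs : IsSimpleSubcomod k C ρ M) : ∃ ρM : M →ₗ[k] M ⊗[k] C, IsComod k C ρM ∧
      IsSimpleComod k C ρM ∧ (∀ u : M, M.subtype.rTensor C (ρM u) = ρ u) ∧
      ∀ f (u : M), (act ρM f u : V) = act ρ f u := by
  obtain ⟨ρM, hc, hr⟩ := exists_restrict h M hs.1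
  have hact : ∀ f (u : M), (act ρM f u : V) = act ρ f u := by
    intro f u
    have := slR_rTensor M.subtype f (ρM u)
    rw [hr] at this
    exact this.symm
  refine ⟨ρM, hc, ⟨?_, ?_, ?_⟩, hr, hact⟩
  · rw [isSubcomod_iff]
    intro _ _ _
    trivial
  · intro h0
    apply hs.2.1
    rw [Submodule.eq_bot_iff]
    intro x hx
    have : (⟨x, hx⟩ : M) ∈ (⊤ : Submodule k M) := trivial
    rw [h0, Submodule.mem_bot] at this
    exact congrArg Subtype.val this
  · intro U' _ hU'
    rw [isSubcomod_iff] at hU'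
    have hsub : IsSubcomod k C ρ (U'.map M.subtype) := by
      rw [isSubcomod_iff]
      rintro f _ ⟨u, hu, rfl⟩
      exact ⟨act ρM f u, hU' f u hu, hact f u⟩
    rcases hs.2.2 _ (Submodule.map_subtype_le M U') hsub with h1 | h1
    · left
      apply Submodule.map_injective_of_injective M.subtype_injective
      rw [h1, Submodule.map_bot]
    · right
      apply Submodule.map_injective_of_injective M.subtype_injective
      rw [h1, Submodule.map_subtype_top]

/-- The free algebra acting on every comodule. -/
abbrev Rg (k C : Type u) [Field k] [AddCommGroup C] [Module k C] : Type u :=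
  FreeAlgebra k (C →ₗ[k] k)

noncomputable abbrev rmod (ρ : V →ₗ[k] V ⊗[k] C) : Module (Rg k C) V :=
  Module.compHom V (FreeAlgebra.lift k (act ρ)).toRingHom

lemma rmod_smul (ρ : V →ₗ[k] V ⊗[k] C) (r : Rg k C) (v : V) :
    letI := rmod ρ
    r • v = FreeAlgebra.lift k (act ρ) r v := rfl

lemma rmod_tower (ρ : V →ₗ[k] V ⊗[k] C) :
    letI := rmod ρ
    IsScalarTower k (Rg k C) V := by
  letI := rmod ρ
  refine ⟨fun a r v => ?_⟩
  rw [rmod_smul, rmod_smul, map_smul]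
  rfl

lemma stab_all (ρ : V →ₗ[k] V ⊗[k] C) (U : Submodule k V)
    (hU : ∀ f : C →ₗ[k] k, ∀ u ∈ U, act ρ f u ∈ U) (r : Rg k C) :
    ∀ u ∈ U, FreeAlgebra.lift k (act ρ) r u ∈ U := by
  induction r using FreeAlgebra.induction with
  | grade0 a => intro u hu; simpa using U.smul_mem a hu
  | grade1 x => intro u hu; simpa using hU x u hu
  | mul a b ha hb => intro u hu; rw [map_mul]; exact ha _ (hb _ hu)
  | add a b ha hb => intro u hu; rw [map_add]; exact U.add_mem (ha _ hu) (hb _ hu)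

/-- A stable subspace as a submodule. -/
noncomputable def toR (ρ : V →ₗ[k] V ⊗[k] C) (U : Submodule k V)
    (hU : IsSubcomod k C ρ U) :
    letI := rmod ρ
    Submodule (Rg k C) V :=
  letI := rmod ρ
  { U with smul_mem' := fun r u hu => stab_all ρ U ((isSubcomod_iff ρ U).1 hU) r u hu }

lemma comm_all (ρ : V →ₗ[k] V ⊗[k] C) (ρ' : W →ₗ[k] W ⊗[k] C) (e : V →ₗ[k] W)
    (h : ∀ f v, e (act ρ f v) = act ρ' f (e v)) (r : Rg k C) :
    ∀ v, e (FreeAlgebra.lift k (act ρ) r v) = FreeAlgebra.lift k (act ρ') r (e v) := by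
  induction r using FreeAlgebra.induction with
  | grade0 a => intro u; simp
  | grade1 x => intro u; simpa using h x u
  | mul a b ha hb => intro u; simp only [map_mul, Module.End.mul_apply, ha, hb]
  | add a b ha hb => intro u; simp only [map_add, LinearMap.add_apply, ha, hb]

noncomputable def homR (ρ : V →ₗ[k] V ⊗[k] C) (ρ' : W →ₗ[k] W ⊗[k] C) (e : V →ₗ[k] W)
    (h : ∀ f v, e (act ρ f v) = act ρ' f (e v)) :
    letI := rmod ρ
    letI := rmod ρ'
    V →ₗ[Rg k C] W :=
  letI := rmod ρ
  letI := rmod ρ'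
  { toFun := e, map_add' := e.map_add, map_smul' := fun r v => comm_all ρ ρ' e h r v }

/-- Submodules are subcomodules. -/
lemma sub_of_R (ρ : V →ₗ[k] V ⊗[k] C) (U : Submodule k V)
    (h : ∀ (r : Rg k C), ∀ u ∈ U, FreeAlgebra.lift k (act ρ) r u ∈ U) :
    IsSubcomod k C ρ U := by
  rw [isSubcomod_iff]
  intro f u hu
  simpa using h (FreeAlgebra.ι k f) u hu

lemma simple_iff (ρ : V →ₗ[k] V ⊗[k] C) (U : Submodule k V) (hU : IsSubcomod k C ρ U) :
    letI := rmod ρ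
    (IsSimpleSubcomod k C ρ U ↔ IsSimpleModule (Rg k C) (toR ρ U hU)) := by
  letI := rmod ρ
  haveI := rmod_tower ρ
  rw [isSimpleModule_iff_isAtom]
  constructor
  · rintro ⟨-, hne, hmin⟩
    refine ⟨fun h => hne ?_, fun N hN => ?_⟩
    · ext x
      exact (SetLike.ext_iff.1 h x)
    · have := hmin (N.restrictScalars k) (fun x hx => hN.le hx)
        (sub_of_R _ _ fun r u hu => N.smul_mem r hu)
      rcases this with h | h
      · ext x
        exact (SetLike.ext_iff.1 h x)
      · exact absurd (fun x hx => (SetLike.ext_iff.1 h x).2 hx) hN.not_ge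
  · intro hA
    refine ⟨hU, fun h => hA.1 ?_, fun U' hle hU' => ?_⟩
    · ext x
      exact (SetLike.ext_iff.1 h x)
    · rcases hA.le_iff.1 (show toR ρ U' hU' ≤ toR ρ U hU from hle) with h | h
      · left
        ext x
        exact (SetLike.ext_iff.1 h x)
      · right
        ext x
        exact (SetLike.ext_iff.1 h x)

lemma coeffSpace_isotypic (ρ : V →ₗ[k] V ⊗[k] C) (h : IsComod k C ρ)
    (hs : IsSimpleComod k C ρ) :
    letI := rmod ρ
    letI := rmod (Coalgebra.comul (R := k) (A := C))
    haveI := rmod_tower (Coalgebra.comul (R := k) (A := C))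
    ∃ N ∈ isotypicComponents (Rg k C) C, coeffSpace k C ρ = N.restrictScalars k := by
  letI := rmod ρ
  letI := rmod (Coalgebra.comul (R := k) (A := C))
  haveI := rmod_tower (Coalgebra.comul (R := k) (A := C))
  have hsV : IsSimpleModule (Rg k C) V := by
    have h1 := (simple_iff ρ ⊤ hs.1).1 hs
    have : toR ρ ⊤ hs.1 = ⊤ := by ext x; exact Iff.rfl
    rw [this] at h1
    exact IsSimpleModule.congr Submodule.topEquiv.symm
  let cf (g : V →ₗ[k] k) : V →ₗ[Rg k C] C :=
    homR ρ (Coalgebra.comul (R := k) (A := C)) (coef ρ g) (fun f v => coef_act h f g v)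
  have heq : ∀ g, cf g ≠ 0 → Nonempty (LinearMap.range (cf g) ≃ₗ[Rg k C] V) := by
    intro g hg
    exact ⟨(LinearEquiv.ofInjective (cf g) (LinearMap.injective_of_ne_zero hg)).symm⟩
  have hmain : coeffSpace k C ρ = (isotypicComponent (Rg k C) C V).restrictScalars k := by
    rw [coeffSpace_eq]
    apply le_antisymm
    · refine iSup_le fun g => ?_
      by_cases hg : cf g = 0
      · rintro _ ⟨v, rfl⟩
        have : coef ρ g v = 0 := LinearMap.congr_fun hg v
        rw [this]
        exact Submodule.zero_mem _
      · have : LinearMap.range (cf g) ≤ isotypicComponent (Rg k C) C V := le_sSup (heq g hg)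
        rintro _ ⟨v, rfl⟩
        exact this ⟨v, rfl⟩
    · rw [isotypicComponent, Submodule.restrictScalars_sSup]
      refine sSup_le ?_
      rintro _ ⟨m, ⟨e⟩, rfl⟩ x hx
      -- the underlying linear map
      let e' : V →ₗ[Rg k C] C := m.subtype ∘ₗ e.symm.toLinearMap
      haveI := rmod_tower ρ
      let e2 : V →ₗ[k] C := e'.restrictScalars k
      have he2 : ∀ f v, e2 (act ρ f v) = act (Coalgebra.comul (R := k) (A := C)) f (e2 v) := by
        intro f v
        have h1 : e' (FreeAlgebra.ι k f • v) = FreeAlgebra.ι k f • e' v := e'.map_smul _ _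
        rw [rmod_smul, rmod_smul] at h1
        rw [FreeAlgebra.lift_ι_apply, FreeAlgebra.lift_ι_apply] at h1
        exact h1
      have he3 : ∀ v, Coalgebra.comul (R := k) (e2 v) = e2.rTensor C (ρ v) := by
        intro v
        refine slR_ext fun f => ?_
        rw [slR_rTensor]
        exact (he2 f v).symm
      refine Submodule.mem_iSup_of_mem (Coalgebra.counit (R := k) ∘ₗ e2) ⟨e ⟨x, hx⟩, ?_⟩
      have hx2 : e2 (e ⟨x, hx⟩) = x := by simp [e2, e']
      rw [coef, LinearMap.comp_apply, ← slL_rTensor, ← he3, hx2]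
      exact coef_counit x
  obtain ⟨v, -, hv⟩ := (Submodule.ne_bot_iff _).1 hs.2.1
  obtain ⟨g, hg⟩ : ∃ g : V →ₗ[k] k, g v ≠ 0 := by
    by_contra! hcon
    exact hv ((Module.forall_dual_apply_eq_zero_iff k v).1 hcon)
  have hcg : cf g ≠ 0 := by
    intro h0
    apply hg
    rw [← counit_coef h g v]
    have : coef ρ g v = 0 := LinearMap.congr_fun h0 v
    rw [this, map_zero]
  obtain ⟨e⟩ := heq g hcg
  exact ⟨_, ⟨LinearMap.range (cf g), IsSimpleModule.congr e, rfl⟩,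
    by rw [e.isotypicComponent_eq]; exact hmain⟩

end comod

end QG4

open QG HopfAlgebra in
/-- Let `π : O(G) → O(H)` be surjective with `O(G)`
cosemisimple and `A := O(G/H) = O(H\G)` a Hopf subalgebra of `O(G)`.  Then
`A` is exactly the direct sum of the coefficient coalgebras `C_U` over the
simple right `O(G)`-comodules `U` whose restriction to `O(H)` has a nonzero
invariant vector. -/
theorem statement_4 (k : Type u) [Field k] [IsAlgClosed k]
    (G H : Type u) [Ring G] [HopfAlgebra k G] [Ring H] [HopfAlgebra k H]
    (π : G →ₐc[k] H) (hsurj : Function.Surjective π)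
    (hcss : IsCosemisimple k G)
    (hAeq : quotientSpaceLeft k G (π : G →ₗ[k] H) =
      quotientSpaceRight k G (π : G →ₗ[k] H))
    (hHopf : IsHopfSubalgebra k G (quotientSpaceLeft k G (π : G →ₗ[k] H))) :
    quotientSpaceLeft k G (π : G →ₗ[k] H) =
      sSup {D : Submodule k G | ∃ U : SimpleComodule k G,
        (∃ v : U.V, v ≠ 0 ∧ IsInvariant k H (cores k G (π : G →ₗ[k] H) U.ρ) v) ∧
        D = coeffSpace k G U.ρ} ∧
    sSupIndep {D : Submodule k G | ∃ U : SimpleComodule k G,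
        (∃ v : U.V, v ≠ 0 ∧ IsInvariant k H (cores k G (π : G →ₗ[k] H) U.ρ) v) ∧
        D = coeffSpace k G U.ρ} := by
  set Δ := Coalgebra.comul (R := k) (A := G) with hΔ
  set A := quotientSpaceLeft k G (π : G →ₗ[k] H) with hA
  have memA : ∀ x, x ∈ A ↔ ∀ f : H →ₗ[k] k,
      QG4.act Δ (f ∘ₗ (π : G →ₗ[k] H)) x = f 1 • x := by
    intro x
    rw [hA, quotientSpaceLeft, LinearMap.mem_ker, LinearMap.sub_apply, sub_eq_zero]
    constructor
    · intro h f
      have := congrArg (QG4.slR f) h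
      rw [LinearMap.comp_apply, QG4.slR_lTensor] at this
      simpa [QG4.act] using this
    · intro h
      refine QG4.slR_ext fun f => ?_
      rw [LinearMap.comp_apply, QG4.slR_lTensor]
      simpa [QG4.act] using h f
  have inv_iff : ∀ {V : Type u} [AddCommGroup V] [Module k V] (ρ : V →ₗ[k] V ⊗[k] G) (v : V),
      IsInvariant k H (cores k G (π : G →ₗ[k] H) ρ) v ↔ ∀ f : H →ₗ[k] k,
      QG4.act ρ (f ∘ₗ (π : G →ₗ[k] H)) v = f 1 • v := by
    intro V _ _ ρ v
    rw [QG.IsInvariant, cores]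
    constructor
    · intro h f
      have := congrArg (QG4.slR f) h
      rw [LinearMap.comp_apply, QG4.slR_lTensor] at this
      simpa [QG4.act] using this
    · intro h
      refine QG4.slR_ext fun f => ?_
      rw [LinearMap.comp_apply, QG4.slR_lTensor]
      simpa [QG4.act] using h f
  have subA : IsSubcomod k G Δ A := by
    intro x hx
    obtain ⟨s, hs⟩ := hHopf.2.2.1 x hx
    refine ⟨A.subtype.lTensor A s, ?_⟩
    rw [hΔ, ← hs, ← LinearMap.comp_apply, LinearMap.rTensor_comp_lTensor]
  letI := QG4.rmod Δ
  haveI := QG4.rmod_tower Δ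
  refine ⟨le_antisymm ?_ (sSup_le ?_), ?_⟩
  · have hss : IsSemisimpleModule (QG4.Rg k G) G := by
      obtain ⟨ι, U, hU, -, htop⟩ := hcss G Δ QG4.isComod_comul
      apply IsSemisimpleModule.of_sSup_simples_eq_top
      rw [eq_top_iff]
      have : (⨆ i, U i) ≤ (sSup {m : Submodule (QG4.Rg k G) G |
          IsSimpleModule (QG4.Rg k G) m}).restrictScalars k := by
        refine iSup_le fun i x hx => ?_
        have h1 := (QG4.simple_iff Δ (U i) (hU i).1).1 (hU i)
        exact (le_sSup h1 : QG4.toR Δ (U i) (hU i).1 ≤ _) hx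
      rw [htop] at this
      intro x _
      exact this trivial
    have h1 := IsSemisimpleModule.sSup_simples_le (QG4.toR Δ A subA)
    have h2 : A = (QG4.toR Δ A subA).restrictScalars k := by ext x; exact Iff.rfl
    rw [h2, ← h1, Submodule.restrictScalars_sSup]
    refine sSup_le ?_
    rintro _ ⟨m, ⟨hm, hmA⟩, rfl⟩
    have hmS : IsSubcomod k G Δ (m.restrictScalars k) :=
      QG4.sub_of_R _ _ fun r u hu => m.smul_mem r hu
    have hmeq : QG4.toR Δ (m.restrictScalars k) hmS = m := by ext x; exact Iff.rfl
    have hsimp : IsSimpleSubcomod k G Δ (m.restrictScalars k) :=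
      (QG4.simple_iff Δ _ hmS).2 (by rw [hmeq]; exact hm)
    have hMA : m.restrictScalars k ≤ A := hmA
    generalize m.restrictScalars k = M at hsimp hMA
    obtain ⟨ρM, hc, hsM, hr, hact⟩ := QG4.exists_simple QG4.isComod_comul M hsimp
    let X : SimpleComodule k G := { V := M, ρ := ρM, isComod := hc, isSimple := hsM }
    have hle : M ≤ coeffSpace k G X.ρ := by
      intro x hx
      rw [QG4.coeffSpace_eq]
      refine Submodule.mem_iSup_of_mem (Coalgebra.counit (R := k) ∘ₗ M.subtype) ⟨⟨x, hx⟩, ?_⟩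
      rw [QG4.coef, LinearMap.comp_apply, ← QG4.slL_rTensor]
      exact (congrArg _ (hr ⟨x, hx⟩)).trans (QG4.coef_counit x)
    refine hle.trans (le_sSup ⟨X, ?_, rfl⟩)
    obtain ⟨x, hx, hx0⟩ := (Submodule.ne_bot_iff _).1 hsimp.2.1
    refine ⟨(⟨x, hx⟩ : M), fun h => hx0 (congrArg Subtype.val h), ?_⟩
    rw [inv_iff]
    intro f
    apply M.subtype_injective
    exact (hact _ _).trans ((memA x).1 (hMA hx) f)
  · rintro _ ⟨U, ⟨v, hv, hinv⟩, rfl⟩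
    rw [inv_iff] at hinv
    let U' : Submodule k U.V := ⨅ g : U.V →ₗ[k] k, A.comap (QG4.coef U.ρ g)
    have hU' : IsSubcomod k G U.ρ U' := by
      rw [QG4.isSubcomod_iff]
      intro f u hu
      simp only [U', Submodule.mem_iInf, Submodule.mem_comap] at hu ⊢
      intro g
      rw [QG4.coef_act U.isComod]
      exact (QG4.isSubcomod_iff _ _).1 subA f _ (hu g)
    have hvU : v ∈ U' := by
      simp only [U', Submodule.mem_iInf, Submodule.mem_comap]
      intro g
      rw [memA]
      intro f
      rw [← QG4.coef_act U.isComod, hinv f, map_smul]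
    rcases U.isSimple.2.2 U' le_top hU' with h | h
    · rw [h] at hvU
      exact absurd hvU hv
    · rw [QG4.coeffSpace_eq]
      refine iSup_le fun g => ?_
      rintro _ ⟨u, rfl⟩
      have hu : u ∈ U' := h ▸ Submodule.mem_top
      simp only [U', Submodule.mem_iInf, Submodule.mem_comap] at hu
      exact hu g
  · have ind := sSupIndep_isotypicComponents (R := QG4.Rg k G) (M := G)
    have key : ∀ D, (∃ U : SimpleComodule k G,
        (∃ v : U.V, v ≠ 0 ∧ IsInvariant k H (cores k G (π : G →ₗ[k] H) U.ρ) v) ∧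
        D = coeffSpace k G U.ρ) → ∃ N ∈ isotypicComponents (QG4.Rg k G) G,
          D = N.restrictScalars k := by
      rintro _ ⟨U, -, rfl⟩
      exact QG4.coeffSpace_isotypic U.ρ U.isComod U.isSimple
    intro D hD
    obtain ⟨N, hN, rfl⟩ := key D hD
    have h1 := ind hN
    rw [Submodule.disjoint_def] at h1 ⊢
    intro x hx hx2
    refine h1 x hx ?_
    have : sSup ({D : Submodule k G | ∃ U : SimpleComodule k G,
        (∃ v : U.V, v ≠ 0 ∧ IsInvariant k H (cores k G (π : G →ₗ[k] H) U.ρ) v) ∧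
        D = coeffSpace k G U.ρ} \ {N.restrictScalars k}) ≤
        (sSup (isotypicComponents (QG4.Rg k G) G \ {N})).restrictScalars k := by
      refine sSup_le ?_
      rintro D' ⟨hD', hne⟩
      obtain ⟨N', hN', rfl⟩ := key D' hD'
      have : N' ≤ sSup (isotypicComponents (QG4.Rg k G) G \ {N}) :=
        le_sSup ⟨hN', fun h => hne (by rw [Set.mem_singleton_iff] at h; rw [h]; rfl)⟩
      exact this
    exact this hx2
end
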